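/- arXiv:1803.11435 — 3 statements merged into one kernel-verified Lean document; each statement's English description precedes it below -/
import Mathlib

section
/- Let p^{S^{-1}}(t,x,y) = ∫_{(0,∞)} (4π t^β s^{-β})^{-d/2} exp(-|x-y|² s^β/(4 t^β)) μ_β(ds) be the Gaussian kernel on ℝ^d time-changed by an inverse β-stable subordinator. Then, as |x-y|^{-2/β} t → 0, p^{S^{-1}}(t,x,y) ∼ K₁ |x-y|^{-d(1-β)/(2-β)} t^{-dβ/(2(2-β))} exp(-K₂ |x-y|^{2/(2-β)} t^{-β/(2-β)}), where K₁ = (β(2-β))^{-1/2} π^{-d/2} 2^{-d/(2-β)} β^{dβ/(2(2-β))} and K₂ = (2-β) 2^{-2/(2-β)} β^{β/(2-β)}; here '∼ as |x-y|^{-2/β} t → 0' means: for every ε > 0 there exists δ > 0 such that whenever t > 0, x ≠ y ∈ ℝ^d and |x-y|^{-2/β} t ≤ δ, the ratio of the two sides lies within ε of 1. -/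
open MeasureTheory Set
open Filter Topology

/-!
The proof is a Laplace method for the one-sided stable law that uses nothing about the law but its
Laplace transform on the positive half-line; no density and no complex analysis enter.

Put `N = 2 ^ (-2/(2-β)) β ^ (β/(2-β)) |x-y| ^ (2/(2-β)) t ^ (-β/(2-β))` and rescale `s = s₀ w` with
`s₀ = β N ^ ((β-1)/β)`. The law `ν N` of `w` satisfies `∫ exp (-N β p w) dν N = exp (-N p ^ β)`, and
the kernel becomes the claimed asymptotic expression without its factor `(β(2-β)) ^ (-1/2)`, times
`J N = ∫ w ^ (β d / 2) exp (N (2 - β - w ^ β)) dν N`. As `|x-y| ^ (-2/β) t → 0` means `N → ∞`, it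
remains to show `J N → (β(2-β)) ^ (-1/2)` (`tendsto_laplace`).

Write `2 - β - w ^ β = (1 - β w) + h(w)` with `h(w) = 1 - β + β w - w ^ β`. The factor
`exp (N (1 - β w))` is the exponential tilt under which `w` concentrates at `1`, and `h` is convex
with minimum `h(1) = 0` and `h''(1) = β (1 - β)`. Near `1` compare `h(w)` with `b (w - 1)² / 2` for
`b` close to `β (1 - β)`, and write `exp (N b (w - 1)² / 2)` as a Gaussian average of exponentials
`exp (-N q β (w - 1))` over small slopes `q` (`gaussMix`, with `c = β² / b`). By Fubini and the
Laplace transform, the mean of the mixture is `∫ exp (N h(1 + q) - N c q² / 2) dq`, which is again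
Gaussian up to replacing `h(1 + q)` by `b q² / 2`. This yields the value
`√(c / (c - b)) = (1 - b² / β²) ^ (-1/2)`, which tends to `(β(2-β)) ^ (-1/2)` as `b → β (1 - β)`.

Away from `w = 1`, the strict inequality `w ^ β + (1 - β) w ^ (-β/(1-β)) > 2 - β` shows that the
integrand is locally dominated by exponentials `exp (N (c - β p w))` with `c < p ^ β`, whose means
`exp (N (c - p ^ β))` vanish in the limit; by compactness finitely many of them suffice
(`exists_affine_cover`), and large `w` are treated by hand (`exists_tail_bound`). Together these
give the two halves of a sandwich, `exists_upper` and `exists_lower`.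
-/

/-! ### The rate function near its minimum -/

/-- Local comparison of the convex rate function `1 - β + β w - w ^ β` with parabolas at its
minimum `w = 1`, where its second derivative is `β (1 - β)`. The sign `σ` selects the direction of
the comparison. -/
lemma rate_compare {β b σ : ℝ} (h : 0 < σ * (b - β * (1 - β))) :
    ∀ᶠ w in 𝓝 (1:ℝ), 0 ≤ σ * (b / 2 * (w - 1) ^ 2 - (1 - β + β * w - w ^ β)) := by
  set g : ℝ → ℝ := fun w => σ * (b / 2 * (w - 1) ^ 2 - (1 - β + β * w - w ^ β)) with hg
  have hd : ∀ w : ℝ, 0 < w → HasDerivAt g (σ * (b * (w - 1) - β + β * w ^ (β - 1))) w := by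
    intro w hw
    have h1 : HasDerivAt (fun w : ℝ => w ^ β) (β * w ^ (β - 1)) w :=
      Real.hasDerivAt_rpow_const (Or.inl hw.ne')
    refine ((((((hasDerivAt_id w).sub_const 1).pow 2).const_mul (b / 2)).sub
      ((((hasDerivAt_id w).const_mul β).const_add (1 - β)).sub h1)).const_mul σ).congr_deriv ?_
    simp only [id, Nat.cast_ofNat, Nat.add_one_sub_one, pow_one]
    ring
  have hd2 : deriv (deriv g) 1 = σ * (b - β * (1 - β)) := by
    have he : deriv g =ᶠ[𝓝 1] fun w => σ * (b * (w - 1) - β + β * w ^ (β - 1)) := by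
      filter_upwards [lt_mem_nhds (zero_lt_one (α := ℝ))] with w hw using (hd w hw).deriv
    rw [he.deriv_eq]
    have h1 : HasDerivAt (fun w : ℝ => w ^ (β - 1)) ((β - 1) * 1 ^ (β - 1 - 1)) 1 :=
      Real.hasDerivAt_rpow_const (Or.inl one_ne_zero)
    have h2 : HasDerivAt (fun w : ℝ => σ * (b * (w - 1) - β + β * w ^ (β - 1))) _ 1 :=
      (((((hasDerivAt_id (1:ℝ)).sub_const 1).const_mul b).sub_const β).add
        (h1.const_mul β)).const_mul σ
    rw [h2.deriv, Real.one_rpow]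
    ring
  have hmin : IsLocalMin g 1 := by
    apply isLocalMin_of_deriv_deriv_pos
    · rw [hd2]; exact h
    · rw [(hd 1 one_pos).deriv]; simp
    · exact (hd 1 one_pos).continuousAt
  have hg1 : g 1 = 0 := by simp [hg]
  filter_upwards [hmin] with w hw
  rwa [hg1] at hw

/-- By convexity, a parabolic lower bound on `|w - 1| ≤ δ` propagates to a linear one further
out. -/
lemma rate_ge_far {β b δ : ℝ} (hβ0 : 0 < β) (hβ1 : β < 1) (hδ : 0 < δ)
    (hloc : ∀ w, |w - 1| ≤ δ → b / 2 * (w - 1) ^ 2 ≤ 1 - β + β * w - w ^ β)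
    {w : ℝ} (hw : 0 < w) (hwδ : δ ≤ |w - 1|) :
    b / 2 * δ * |w - 1| ≤ 1 - β + β * w - w ^ β := by
  have hA : 0 < |w - 1| := hδ.trans_le hwδ
  set l := δ / |w - 1| with hl
  have hl0 : 0 < l := div_pos hδ hA
  have hl1 : l ≤ 1 := (div_le_one hA).2 hwδ
  have hlA : l * |w - 1| = δ := div_mul_cancel₀ _ hA.ne'
  have hc := (Real.concaveOn_rpow hβ0.le hβ1.le).2 (x := w) (y := 1) hw.le
    (show (1:ℝ) ∈ Ici 0 from mem_Ici.2 zero_le_one) hl0.le (sub_nonneg.2 hl1) (by ring)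
  simp only [smul_eq_mul, Real.one_rpow, mul_one] at hc
  have hx := hloc (l * w + (1 - l)) (by
    rw [show l * w + (1 - l) - 1 = l * (w - 1) by ring, abs_mul, abs_of_pos hl0, hlA])
  have h2 : (l * w + (1 - l) - 1) ^ 2 = l * (δ * |w - 1|) := by
    rw [show l * w + (1 - l) - 1 = l * (w - 1) by ring, mul_pow, ← sq_abs (w - 1), ← hlA]; ring
  rw [h2] at hx
  have : l * (b / 2 * δ * |w - 1|) ≤ l * (1 - β + β * w - w ^ β) := by nlinarith
  exact le_of_mul_le_mul_left this hl0

/-! ### Domination by exponentials of affine functions -/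

/-- Away from `w = 1` the exponent `2 - β - w ^ β` lies below an affine function
`c - β p w` whose exponential moment `exp (N (c - p ^ β))` decays. -/
lemma exists_affine {β : ℝ} (hβ0 : 0 < β) (hβ1 : β < 1) {w₀ : ℝ} (h0 : 0 ≤ w₀) (h1 : w₀ ≠ 1) :
    ∃ p c : ℝ, 0 < p ∧ c < p ^ β ∧ ∀ᶠ w in 𝓝 w₀, 2 - β - w ^ β ≤ c - β * p * w := by
  have key : ∃ p : ℝ, 0 < p ∧ 2 - β - w₀ ^ β + β * p * w₀ < p ^ β := by
    rcases h0.eq_or_lt with rfl | hpos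
    · refine ⟨2 ^ (1 / β), by positivity, ?_⟩
      rw [← Real.rpow_mul zero_le_two, one_div_mul_cancel hβ0.ne', Real.rpow_one,
        Real.zero_rpow hβ0.ne']
      linarith
    · -- the Legendre point of the exponent at `w₀`
      obtain ⟨u, rfl⟩ : ∃ u, w₀ = Real.exp u := ⟨Real.log w₀, (Real.exp_log hpos).symm⟩
      have hu : u ≠ 0 := by rintro rfl; simp at h1
      have hb : 1 - β ≠ 0 := by linarith
      refine ⟨Real.exp (-(u / (1 - β))), Real.exp_pos _, ?_⟩
      rw [← Real.exp_mul, ← Real.exp_mul, mul_assoc, ← Real.exp_add]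
      have e1 : -(u / (1 - β)) + u = -(u * β / (1 - β)) := by field_simp; ring
      have e2 : -(u / (1 - β)) * β = -(u * β / (1 - β)) := by ring
      rw [e1, e2]
      have i1 := Real.add_one_lt_exp (mul_ne_zero hu hβ0.ne')
      have i2 := Real.add_one_lt_exp (x := -(u * β / (1 - β)))
        (neg_ne_zero.2 (div_ne_zero (mul_ne_zero hu hβ0.ne') hb))
      have i3 := mul_lt_mul_of_pos_left i2 (sub_pos.2 hβ1)
      have e3 : (1 - β) * (-(u * β / (1 - β)) + 1) = -(u * β) + (1 - β) := by field_simp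
      rw [e3] at i3
      linarith
  obtain ⟨p, hp, hlt⟩ := key
  obtain ⟨c, hc1, hc2⟩ := exists_between hlt
  refine ⟨p, c, hp, hc2, ?_⟩
  have hcont : ContinuousAt (fun w : ℝ => 2 - β - w ^ β + β * p * w) w₀ :=
    (continuousAt_const.sub (Real.continuousAt_rpow_const _ _ (Or.inr hβ0.le))).add
      (by fun_prop)
  filter_upwards [hcont.eventually (gt_mem_nhds hc1)] with w hw
  linarith

lemma exists_affine_cover {β : ℝ} (hβ0 : 0 < β) (hβ1 : β < 1) {K : Set ℝ} (hK : IsCompact K)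
    (hK0 : ∀ w ∈ K, 0 ≤ w ∧ w ≠ 1) :
    ∃ (t : Finset ℝ) (p c : ℝ → ℝ), (∀ x ∈ t, 0 < p x ∧ c x < p x ^ β) ∧
      ∀ w ∈ K, ∃ x ∈ t, 2 - β - w ^ β ≤ c x - β * p x * w := by
  have h : ∀ x : ℝ, ∃ p c : ℝ, x ∈ K → 0 < p ∧ c < p ^ β ∧
      ∀ᶠ w in 𝓝 x, 2 - β - w ^ β ≤ c - β * p * w := by
    intro x
    by_cases hx : x ∈ K
    · obtain ⟨p, c, h⟩ := exists_affine hβ0 hβ1 (hK0 x hx).1 (hK0 x hx).2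
      exact ⟨p, c, fun _ => h⟩
    · exact ⟨0, 0, fun h => absurd h hx⟩
  choose p c h using h
  obtain ⟨t, htK, ht⟩ := hK.elim_nhds_subcover
    (fun x => {w | 2 - β - w ^ β ≤ c x - β * p x * w}) (fun x hx => (h x hx).2.2)
  refine ⟨t, p, c, fun x hx => ⟨(h x (htK x hx)).1, (h x (htK x hx)).2.1⟩, fun w hw => ?_⟩
  simpa using ht hw

/-! ### Gaussian integrals over intervals -/

lemma integral_Icc_gaussian_le {A : ℝ} (hA : 0 < A) (η : ℝ) :
    ∫ q in Icc (-η) η, Real.exp (-(A * q ^ 2 / 2)) ≤ √(2 * Real.pi / A) := by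
  have h := integral_gaussian (A / 2)
  have hi := integrable_exp_neg_mul_sq (half_pos hA)
  have e : ∀ q : ℝ, -(A * q ^ 2 / 2) = -(A / 2) * q ^ 2 := fun q => by ring
  simp only [e]
  refine (setIntegral_le_integral hi (ae_of_all _ fun _ => (Real.exp_pos _).le)).trans ?_
  rw [h]
  apply le_of_eq; congr 1; field_simp

lemma tendsto_Icc_gaussian {η : ℝ} (hη : 0 < η) :
    Tendsto (fun A : ℝ => √(A / (2 * Real.pi)) * ∫ q in Icc (-η) η, Real.exp (-(A * q ^ 2 / 2)))
      atTop (𝓝 1) := by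
  have hi := integrable_exp_neg_mul_sq (b := 1 / 2) (by norm_num)
  have hs : Tendsto (fun A : ℝ => √A * η) atTop atTop :=
    Real.tendsto_sqrt_atTop.atTop_mul_const hη
  have h := (intervalIntegral_tendsto_integral hi (tendsto_neg_atTop_atBot.comp hs) hs).const_mul
    (√(2 * Real.pi))⁻¹
  rw [integral_gaussian, show Real.pi / (1 / 2) = 2 * Real.pi by ring,
    inv_mul_cancel₀ (by positivity)] at h
  refine h.congr' ?_
  filter_upwards [eventually_gt_atTop 0] with A hA
  have hsA : 0 < √A := Real.sqrt_pos.2 hA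
  rw [integral_Icc_eq_integral_Ioc, ← intervalIntegral.integral_of_le (by linarith)]
  have e : ∀ q : ℝ, Real.exp (-(A * q ^ 2 / 2)) = Real.exp (-(1 / 2) * (√A * q) ^ 2) := fun q => by
    rw [mul_pow, Real.sq_sqrt hA.le]; congr 1; ring
  simp only [e]
  rw [intervalIntegral.integral_comp_mul_left (fun x => Real.exp (-(1 / 2) * x ^ 2)) hsA.ne',
    Real.sqrt_div hA.le]
  simp only [Function.comp, smul_eq_mul, mul_neg]
  field_simp

/-! ### Gaussian mixtures of exponentials -/

/-- The exponential `exp (N (1 - β w) - N q β (w - 1))` averaged over slopes `q ∈ [-η, η]` against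
the unnormalised Gaussian weight `exp (-N c q² / 2)`. As a function of `w` it is a truncated
version of `exp (N (1 - β w) + N β² (w - 1)² / (2 c))`, and its mean under a law with known Laplace
transform is an explicit one-dimensional integral. -/
noncomputable def gaussMix (β N c η w : ℝ) : ℝ :=
  ∫ q in Icc (-η) η, Real.exp (N * (1 + β * q) - N * β * (1 + q) * w - N * c * q ^ 2 / 2)

lemma gaussMix_integrand {β N c w : ℝ} (hc : 0 < c) (q : ℝ) :
    Real.exp (N * (1 + β * q) - N * β * (1 + q) * w - N * c * q ^ 2 / 2) =
      Real.exp (N * (1 - β * w) + N * (β ^ 2 / c) * (w - 1) ^ 2 / 2) *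
        Real.exp (-(N * c * (q + β * (w - 1) / c) ^ 2 / 2)) := by
  rw [← Real.exp_add]; congr 1; field_simp; ring

lemma le_gaussMix {β N c η w : ℝ} (hc : 0 < c) (hw : |β * (w - 1) / c| ≤ η / 2) :
    Real.exp (N * (1 - β * w) + N * (β ^ 2 / c) * (w - 1) ^ 2 / 2) *
      (∫ q in Icc (-(η / 2)) (η / 2), Real.exp (-(N * c * q ^ 2 / 2))) ≤ gaussMix β N c η w := by
  unfold gaussMix
  simp_rw [gaussMix_integrand hc]
  rw [integral_const_mul]
  refine mul_le_mul_of_nonneg_left ?_ (Real.exp_pos _).le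
  set m := β * (w - 1) / c
  have hm := abs_le.1 hw
  have hη : 0 ≤ η / 2 := (abs_nonneg _).trans hw
  have e : ∫ q in Icc (-(η / 2)) (η / 2), Real.exp (-(N * c * q ^ 2 / 2)) =
      ∫ q in Icc (-(η / 2) - m) (η / 2 - m), Real.exp (-(N * c * (q + m) ^ 2 / 2)) := by
    rw [integral_Icc_eq_integral_Ioc, integral_Icc_eq_integral_Ioc,
      ← intervalIntegral.integral_of_le (by linarith),
      ← intervalIntegral.integral_of_le (by linarith),
      intervalIntegral.integral_comp_add_right (fun q => Real.exp (-(N * c * q ^ 2 / 2)))]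
    simp
  rw [e]
  apply setIntegral_mono_set
  · exact (by fun_prop : Continuous fun q : ℝ =>
      Real.exp (-(N * c * (q + m) ^ 2 / 2))).integrableOn_Icc
  · exact ae_of_all _ fun _ => (Real.exp_pos _).le
  · exact (Icc_subset_Icc (by linarith) (by linarith)).eventuallyLE

lemma gaussMix_le {β N c η w : ℝ} (hN : 0 < N) (hc : 0 < c) :
    gaussMix β N c η w ≤ Real.exp (N * (1 - β * w) + N * (β ^ 2 / c) * (w - 1) ^ 2 / 2) *
      √(2 * Real.pi / (N * c)) := by
  unfold gaussMix
  simp_rw [gaussMix_integrand hc]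
  rw [integral_const_mul]
  refine mul_le_mul_of_nonneg_left ?_ (Real.exp_pos _).le
  set m := β * (w - 1) / c
  have hi := integrable_exp_neg_mul_sq (half_pos (mul_pos hN hc))
  have e : ∀ q : ℝ, Real.exp (-(N * c * (q + m) ^ 2 / 2)) =
      (fun q => Real.exp (-(N * c / 2) * q ^ 2)) (q + m) := fun q => by
    simp only; congr 1; ring
  simp only [e]
  refine (setIntegral_le_integral (hi.comp_add_right m)
    (ae_of_all _ fun _ => (Real.exp_pos _).le)).trans ?_
  rw [integral_add_right_eq_self (fun q => Real.exp (-(N * c / 2) * q ^ 2)), integral_gaussian]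
  apply le_of_eq; congr 1; field_simp

/-- A cruder bound than `gaussMix_le`, growing only exponentially in `w` because the slopes are
confined to `[-η, η]`. -/
lemma gaussMix_le' {β N c η w : ℝ} (hβ : 0 < β) (hN : 0 < N) (hc : 0 < c) :
    gaussMix β N c η w ≤ Real.exp (N * (1 - β * w) + N * (β * η * |w - 1|)) *
      √(2 * Real.pi / (N * c)) := by
  refine le_trans ?_ (mul_le_mul_of_nonneg_left (integral_Icc_gaussian_le (mul_pos hN hc) η)
    (Real.exp_pos _).le)
  unfold gaussMix
  rw [← integral_const_mul]
  refine setIntegral_mono_on ?_ ?_ measurableSet_Icc ?_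
  · exact Continuous.integrableOn_Icc (by fun_prop)
  · exact Continuous.integrableOn_Icc (by fun_prop)
  · intro q hq
    rw [← Real.exp_add, Real.exp_le_exp]
    have h1 : -(q * (w - 1)) ≤ η * |w - 1| := by
      refine (neg_le_abs _).trans ?_
      rw [abs_mul]
      exact mul_le_mul_of_nonneg_right (abs_le.2 hq) (abs_nonneg _)
    have h2 := mul_le_mul_of_nonneg_left h1 (mul_pos hN hβ).le
    nlinarith

section Mean

variable {β N : ℝ} {ν : Measure ℝ}

lemma integrable_exp_affine [IsProbabilityMeasure ν] (hβ : 0 < β) (hN : 0 < N)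
    (hpos : ∀ᵐ w ∂ν, 0 < w) {p : ℝ} (hp : 0 < p) (c : ℝ) :
    Integrable (fun w => Real.exp (N * (c - β * p * w))) ν := by
  refine Integrable.of_bound (by fun_prop) (Real.exp (N * c)) ?_
  filter_upwards [hpos] with w hw
  rw [Real.norm_eq_abs, Real.abs_exp, Real.exp_le_exp]
  have : 0 < β * p * w := by positivity
  nlinarith

lemma integral_exp_affine
    (hL : ∀ p : ℝ, 0 < p → ∫ w, Real.exp (-(N * β * p * w)) ∂ν = Real.exp (-(N * p ^ β)))
    {p : ℝ} (hp : 0 < p) (c : ℝ) :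
    ∫ w, Real.exp (N * (c - β * p * w)) ∂ν = Real.exp (-(N * (p ^ β - c))) := by
  have e : ∀ w, Real.exp (N * (c - β * p * w)) =
      Real.exp (N * c) * Real.exp (-(N * β * p * w)) := fun w => by
    rw [← Real.exp_add]; congr 1; ring
  simp_rw [e]
  rw [integral_const_mul, hL p hp, ← Real.exp_add]; congr 1; ring

variable [IsProbabilityMeasure ν]

lemma integrable_gaussMix_prod {c η : ℝ} (hβ : 0 < β) (hN : 0 < N) (hc : 0 < c) (hη1 : η < 1)
    (hpos : ∀ᵐ w ∂ν, 0 < w) :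
    Integrable (Function.uncurry fun w q : ℝ =>
      Real.exp (N * (1 + β * q) - N * β * (1 + q) * w - N * c * q ^ 2 / 2))
      (ν.prod (volume.restrict (Icc (-η) η))) := by
  refine Integrable.of_bound (Continuous.aestronglyMeasurable (by fun_prop))
    (Real.exp (N * (1 + β * η))) ?_
  filter_upwards [Measure.quasiMeasurePreserving_fst.ae hpos,
    Measure.quasiMeasurePreserving_snd.ae (ae_restrict_mem measurableSet_Icc)] with z hz hq
  rw [Function.uncurry, Real.norm_eq_abs, Real.abs_exp, Real.exp_le_exp]
  have h1 : 0 < 1 + z.2 := by linarith [hq.1]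
  have h2 : 0 ≤ N * β * (1 + z.2) * z.1 := by positivity
  have h3 : 0 ≤ N * c * z.2 ^ 2 / 2 := by positivity
  have h4 : N * (β * z.2) ≤ N * (β * η) := by
    have := hq.2
    gcongr
  linarith

lemma integrable_gaussMix {c η : ℝ} (hβ : 0 < β) (hN : 0 < N) (hc : 0 < c) (hη1 : η < 1)
    (hpos : ∀ᵐ w ∂ν, 0 < w) : Integrable (gaussMix β N c η) ν :=
  (integrable_gaussMix_prod hβ hN hc hη1 hpos).integral_prod_left

lemma integral_gaussMix {c η : ℝ} (hβ : 0 < β) (hN : 0 < N) (hc : 0 < c) (hη1 : η < 1)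
    (hpos : ∀ᵐ w ∂ν, 0 < w)
    (hL : ∀ p : ℝ, 0 < p → ∫ w, Real.exp (-(N * β * p * w)) ∂ν = Real.exp (-(N * p ^ β))) :
    ∫ w, gaussMix β N c η w ∂ν = ∫ q in Icc (-η) η,
      Real.exp (N * (1 - β + β * (1 + q) - (1 + q) ^ β) - N * c * q ^ 2 / 2) := by
  unfold gaussMix
  rw [integral_integral_swap (integrable_gaussMix_prod hβ hN hc hη1 hpos)]
  refine setIntegral_congr_fun measurableSet_Icc fun q hq => ?_
  have h1 : 0 < 1 + q := by linarith [hq.1]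
  have e : ∀ w, Real.exp (N * (1 + β * q) - N * β * (1 + q) * w - N * c * q ^ 2 / 2) =
      Real.exp (N * ((1 + β * q - c * q ^ 2 / 2) - β * (1 + q) * w)) := fun w => by
    congr 1; ring
  simp only [e]
  rw [integral_exp_affine hL h1]
  congr 1; ring

lemma integral_gaussMix_le {b c η : ℝ} (hβ : 0 < β) (hN : 0 < N) (hc : 0 < c) (hbc : b < c)
    (hη1 : η < 1) (hpos : ∀ᵐ w ∂ν, 0 < w)
    (hL : ∀ p : ℝ, 0 < p → ∫ w, Real.exp (-(N * β * p * w)) ∂ν = Real.exp (-(N * p ^ β)))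
    (hloc : ∀ w, |w - 1| ≤ η → 1 - β + β * w - w ^ β ≤ b / 2 * (w - 1) ^ 2) :
    ∫ w, gaussMix β N c η w ∂ν ≤ √(2 * Real.pi / (N * (c - b))) := by
  rw [integral_gaussMix hβ hN hc hη1 hpos hL]
  refine le_trans ?_ (integral_Icc_gaussian_le (mul_pos hN (sub_pos.2 hbc)) η)
  refine setIntegral_mono_on ?_ ?_ measurableSet_Icc ?_
  · refine ContinuousOn.integrableOn_Icc ?_
    intro q hq
    have h1 : 1 + q ≠ 0 := by linarith [hq.1]
    exact ContinuousAt.continuousWithinAt (by fun_prop (disch := simp [h1]))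
  · exact Continuous.integrableOn_Icc (by fun_prop)
  · intro q hq
    rw [Real.exp_le_exp]
    have := hloc (1 + q) (by simpa [abs_le] using hq)
    have := mul_le_mul_of_nonneg_left this hN.le
    nlinarith

lemma le_integral_gaussMix {b c η : ℝ} (hβ : 0 < β) (hN : 0 < N) (hc : 0 < c)
    (hη1 : η < 1) (hpos : ∀ᵐ w ∂ν, 0 < w)
    (hL : ∀ p : ℝ, 0 < p → ∫ w, Real.exp (-(N * β * p * w)) ∂ν = Real.exp (-(N * p ^ β)))
    (hloc : ∀ w, |w - 1| ≤ η → b / 2 * (w - 1) ^ 2 ≤ 1 - β + β * w - w ^ β) :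
    ∫ q in Icc (-η) η, Real.exp (-(N * (c - b) * q ^ 2 / 2)) ≤ ∫ w, gaussMix β N c η w ∂ν := by
  rw [integral_gaussMix hβ hN hc hη1 hpos hL]
  refine setIntegral_mono_on ?_ ?_ measurableSet_Icc ?_
  · exact Continuous.integrableOn_Icc (by fun_prop)
  · refine ContinuousOn.integrableOn_Icc ?_
    intro q hq
    have h1 : 1 + q ≠ 0 := by linarith [hq.1]
    exact ContinuousAt.continuousWithinAt (by fun_prop (disch := simp [h1]))
  · intro q hq
    rw [Real.exp_le_exp]
    have := hloc (1 + q) (by simpa [abs_le] using hq)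
    have := mul_le_mul_of_nonneg_left this hN.le
    nlinarith

end Mean

/-! ### The limit of the rescaled integral -/

lemma exists_tail_bound {β : ℝ} (hβ0 : 0 < β) {κ : ℝ} :
    ∃ M : ℝ, 2 ≤ M ∧ ∀ w, M ≤ w → ∀ N : ℝ, 1 ≤ N →
      w ^ κ * Real.exp (N * (2 - β - w ^ β)) ≤ Real.exp (-N) := by
  have h1 : Tendsto (fun w : ℝ => w ^ β) atTop atTop := tendsto_rpow_atTop hβ0
  have h2 := (tendsto_rpow_mul_exp_neg_mul_atTop_nhds_zero (κ / β) (1 / 4) (by norm_num)).comp h1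
  obtain ⟨M, hM⟩ := eventually_atTop.1 ((h1.eventually_ge_atTop 4).and
    (h2.eventually (ge_mem_nhds zero_lt_one)))
  refine ⟨max M 2, le_max_right _ _, fun w hw N hN => ?_⟩
  obtain ⟨h4, h5⟩ := hM w ((le_max_left _ _).trans hw)
  have hw0 : 0 < w := by linarith [(le_max_right M 2).trans hw]
  simp only [Function.comp] at h5
  rw [← Real.rpow_mul hw0.le, mul_div_cancel₀ _ hβ0.ne'] at h5
  calc w ^ κ * Real.exp (N * (2 - β - w ^ β))
      ≤ w ^ κ * (Real.exp (-(1 / 4) * w ^ β) * Real.exp (-N)) := by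
        refine mul_le_mul_of_nonneg_left ?_ (by positivity)
        rw [← Real.exp_add, Real.exp_le_exp]
        nlinarith [mul_nonneg (sub_nonneg.2 hN) (sub_nonneg.2 h4)]
    _ = w ^ κ * Real.exp (-(1 / 4) * w ^ β) * Real.exp (-N) := by ring
    _ ≤ 1 * Real.exp (-N) := mul_le_mul_of_nonneg_right h5 (Real.exp_pos _).le
    _ = Real.exp (-N) := one_mul _

lemma integrable_target {β N κ : ℝ} (hβ0 : 0 < β) (hN : 1 ≤ N) (hκ : 0 ≤ κ) {ν : Measure ℝ}
    [IsProbabilityMeasure ν] (hpos : ∀ᵐ w ∂ν, 0 < w) :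
    Integrable (fun w => w ^ κ * Real.exp (N * (2 - β - w ^ β))) ν := by
  obtain ⟨M, hM2, hM⟩ := exists_tail_bound hβ0 (κ := κ)
  refine Integrable.of_bound (Measurable.aestronglyMeasurable (by fun_prop))
    (M ^ κ * Real.exp (N * (2 - β)) + 1) ?_
  filter_upwards [hpos] with w hw
  rw [Real.norm_eq_abs, abs_of_nonneg (by positivity)]
  rcases le_total w M with h | h
  · have : w ^ κ * Real.exp (N * (2 - β - w ^ β)) ≤ M ^ κ * Real.exp (N * (2 - β)) := by
      refine mul_le_mul (Real.rpow_le_rpow hw.le h hκ) (Real.exp_le_exp.2 ?_)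
        (Real.exp_pos _).le (by positivity)
      have : 0 ≤ w ^ β := by positivity
      exact mul_le_mul_of_nonneg_left (by linarith) (by linarith)
    linarith
  · have h1 := hM w h N hN
    have h2 : Real.exp (-N) ≤ 1 := Real.exp_le_one_iff.2 (by linarith)
    have : 0 ≤ M ^ κ * Real.exp (N * (2 - β)) := by positivity
    linarith

section Limit

variable {β κ : ℝ} {ν : ℝ → Measure ℝ}

lemma tendsto_sum_affine {t : Finset ℝ} {p c : ℝ → ℝ} (ht : ∀ x ∈ t, 0 < p x ∧ c x < p x ^ β) :
    Tendsto (fun N : ℝ => ∑ x ∈ t, Real.exp (-(N * (p x ^ β - c x)))) atTop (𝓝 0) := by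
  rw [← Finset.sum_const_zero (s := t)]
  refine tendsto_finsetSum _ fun x hx => ?_
  exact Real.tendsto_exp_neg_atTop_nhds_zero.comp
    (tendsto_id.atTop_mul_const (sub_pos.2 (ht x hx).2))

/-- Upper half of the sandwich: near `w = 1` the integrand is dominated by a Gaussian mixture of
exponentials, on the rest of a compact interval by finitely many exponentials of negligible mean,
and in the tail by `exp (-N)`. -/
lemma exists_upper (hβ0 : 0 < β) (hβ1 : β < 1) (hκ : 0 ≤ κ)
    (hprob : ∀ N, IsProbabilityMeasure (ν N)) (hpos : ∀ N, 0 < N → ∀ᵐ w ∂ν N, 0 < w)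
    (hL : ∀ N, 0 < N → ∀ p : ℝ, 0 < p →
      ∫ w, Real.exp (-(N * β * p * w)) ∂ν N = Real.exp (-(N * p ^ β)))
    {ε b : ℝ} (hε : 0 < ε) (hb : β * (1 - β) < b) (hbβ : b < β) :
    ∃ U : ℝ → ℝ, Tendsto U atTop (𝓝 ((1 + ε) * √(β ^ 2 / b / (β ^ 2 / b - b)))) ∧
      ∀ᶠ N in atTop, ∫ w, w ^ κ * Real.exp (N * (2 - β - w ^ β)) ∂ν N ≤ U N := by
  have hb0 : 0 < b := lt_trans (mul_pos hβ0 (sub_pos.2 hβ1)) hb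
  obtain ⟨c, hc⟩ : ∃ c, c = β ^ 2 / b := ⟨_, rfl⟩
  have hc0 : 0 < c := hc ▸ by positivity
  have hbc : b < c := by rw [hc, lt_div_iff₀ hb0]; nlinarith
  have hβc : β ^ 2 / c = b := by rw [hc]; field_simp
  rw [← hc]
  -- an interval around `1` on which the parabola dominates the rate function
  obtain ⟨η₀, hη₀, hloc₀⟩ := Metric.eventually_nhds_iff_ball.1
    (rate_compare (β := β) (b := b) (σ := 1) (by linarith))
  obtain ⟨η, hη0, hη⟩ := exists_between (lt_min hη₀ one_pos)
  have hη1 : η < 1 := hη.trans_le (min_le_right _ _)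
  have hloc : ∀ w, |w - 1| ≤ η → 1 - β + β * w - w ^ β ≤ b / 2 * (w - 1) ^ 2 := fun w hw => by
    have := hloc₀ w (by
      rw [Metric.mem_ball, Real.dist_eq]; exact hw.trans_lt (hη.trans_le (min_le_left _ _)))
    linarith
  -- a smaller interval on which, moreover, the weight is close to `1`
  have hwt : ∀ᶠ w in 𝓝 (1:ℝ), w ^ κ ≤ 1 + ε := by
    have : ContinuousAt (fun w : ℝ => w ^ κ) 1 :=
      Real.continuousAt_rpow_const _ _ (Or.inl one_ne_zero)
    exact this.eventually (ge_mem_nhds (by simpa using hε))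
  obtain ⟨δ₀, hδ₀, hwt₀⟩ := Metric.eventually_nhds_iff_ball.1 hwt
  obtain ⟨δ, hδ0, hδ⟩ := exists_between (lt_min hδ₀ (lt_min hη0
    (show 0 < η / 2 * c / β by positivity)))
  obtain ⟨M, hM2, hM⟩ := exists_tail_bound hβ0 (κ := κ)
  have hK : IsCompact (Icc 0 M \ Metric.ball 1 δ) := isCompact_Icc.diff Metric.isOpen_ball
  obtain ⟨t, p, k, ht, hcov⟩ := exists_affine_cover hβ0 hβ1 hK (fun w hw => ⟨hw.1.1, by
    rintro rfl; exact hw.2 (Metric.mem_ball_self hδ0)⟩)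
  let G : ℝ → ℝ := fun N => ∫ q in Icc (-(η / 2)) (η / 2), Real.exp (-(N * c * q ^ 2 / 2))
  have hGt : Tendsto (fun N => √(N * c / (2 * Real.pi)) * G N) atTop (𝓝 1) :=
    (tendsto_Icc_gaussian (half_pos hη0)).comp (tendsto_id.atTop_mul_const hc0)
  refine ⟨fun N => (1 + ε) * ((√(N * c / (2 * Real.pi)) * G N)⁻¹ * √(c / (c - b))) +
    M ^ κ * ∑ x ∈ t, Real.exp (-(N * (p x ^ β - k x))) + Real.exp (-N), ?_, ?_⟩
  · have := ((((hGt.inv₀ one_ne_zero).mul_const (√(c / (c - b)))).const_mul (1 + ε)).add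
      ((tendsto_sum_affine ht).const_mul (M ^ κ))).add Real.tendsto_exp_neg_atTop_nhds_zero
    simpa using this
  filter_upwards [eventually_ge_atTop 1, hGt.eventually (lt_mem_nhds zero_lt_one)] with N hN1 hGN
  have hN : 0 < N := by linarith
  have := hprob N
  have hG0 : 0 < G N := pos_of_mul_pos_right hGN (Real.sqrt_nonneg _)
  have hE := integral_gaussMix_le hβ0 hN hc0 hbc hη1 (hpos N hN) (hL N hN) hloc
  have hi1 := (integrable_gaussMix (c := c) hβ0 hN hc0 hη1 (hpos N hN)).const_mul
    ((1 + ε) * (G N)⁻¹)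
  have hi2 := (integrable_finsetSum t (fun x hx =>
    integrable_exp_affine hβ0 hN (hpos N hN) (ht x hx).1 (k x))).const_mul (M ^ κ)
  calc ∫ w, w ^ κ * Real.exp (N * (2 - β - w ^ β)) ∂ν N
      ≤ ∫ w, ((1 + ε) * (G N)⁻¹ * gaussMix β N c η w +
          M ^ κ * ∑ x ∈ t, Real.exp (N * (k x - β * p x * w)) + Real.exp (-N)) ∂ν N := by
        refine integral_mono_ae (integrable_target hβ0 hN1 hκ (hpos N hN))
          ((hi1.add hi2).add (integrable_const _)) ?_
        filter_upwards [hpos N hN] with w hw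
        have hm0 : 0 ≤ gaussMix β N c η w := integral_nonneg fun q => (Real.exp_pos _).le
        have t1 : 0 ≤ (1 + ε) * (G N)⁻¹ * gaussMix β N c η w := by positivity
        have t2 : 0 ≤ M ^ κ * ∑ x ∈ t, Real.exp (N * (k x - β * p x * w)) := by positivity
        have t3 := Real.exp_pos (-N)
        by_cases hwδ : w ∈ Metric.ball 1 δ
        · have hd : |w - 1| < δ := by rwa [Metric.mem_ball, Real.dist_eq] at hwδ
          have a1 : w ^ κ ≤ 1 + ε := hwt₀ w (by
            rw [Metric.mem_ball, Real.dist_eq]; exact hd.trans (hδ.trans_le (min_le_left _ _)))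
          have hδ' := hδ.le.trans (min_le_right _ _)
          have a2 := hloc w (hd.le.trans (hδ'.trans (min_le_left _ _)))
          have a3 := le_gaussMix (β := β) (N := N) (η := η) (w := w) hc0 (by
            rw [abs_div, abs_mul, abs_of_pos hβ0, abs_of_pos hc0, div_le_iff₀ hc0]
            have := (hd.le.trans (hδ'.trans (min_le_right _ _)))
            rw [le_div_iff₀ hβ0] at this
            linarith)
          rw [hβc, ← le_div_iff₀ hG0] at a3
          have a4 : Real.exp (N * (2 - β - w ^ β)) ≤
              Real.exp (N * (1 - β * w) + N * b * (w - 1) ^ 2 / 2) := by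
            rw [Real.exp_le_exp]
            have := mul_le_mul_of_nonneg_left a2 hN.le
            linarith
          have a5 := mul_le_mul a1 (a4.trans a3) (Real.exp_pos _).le (by linarith)
          have a6 : (1 + ε) * (gaussMix β N c η w / G N) =
            (1 + ε) * (G N)⁻¹ * gaussMix β N c η w := by ring
          linarith
        · rcases le_total w M with h | h
          · obtain ⟨x, hx, hle⟩ := hcov w ⟨⟨hw.le, h⟩, hwδ⟩
            have a1 : Real.exp (N * (2 - β - w ^ β)) ≤
                ∑ x ∈ t, Real.exp (N * (k x - β * p x * w)) := by
              refine le_trans ?_ (Finset.single_le_sum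
                (f := fun x => Real.exp (N * (k x - β * p x * w)))
                (fun _ _ => (Real.exp_pos _).le) hx)
              rw [Real.exp_le_exp]
              exact mul_le_mul_of_nonneg_left hle hN.le
            have a2 : w ^ κ ≤ M ^ κ := Real.rpow_le_rpow hw.le h hκ
            have a3 := mul_le_mul a2 a1 (Real.exp_pos _).le (by positivity)
            linarith
          · have := hM w h N hN1
            linarith
    _ = (1 + ε) * (G N)⁻¹ * ∫ w, gaussMix β N c η w ∂ν N +
          M ^ κ * ∑ x ∈ t, Real.exp (-(N * (p x ^ β - k x))) + Real.exp (-N) := by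
        rw [integral_add (by exact hi1.add hi2) (integrable_const _), integral_add hi1 hi2,
          integral_const_mul, integral_const_mul, integral_finsetSum _ (fun x hx =>
            integrable_exp_affine hβ0 hN (hpos N hN) (ht x hx).1 (k x))]
        rw [Finset.sum_congr rfl fun x hx => integral_exp_affine (hL N hN) (ht x hx).1 (k x)]
        simp
    _ ≤ _ := by
        refine add_le_add_left (add_le_add_left ?_ _) _
        refine (mul_le_mul_of_nonneg_left hE (by positivity)).trans (le_of_eq ?_)
        rw [mul_assoc, mul_inv, mul_comm (√_)⁻¹, mul_assoc]
        congr 2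
        have h2 : 0 < c - b := sub_pos.2 hbc
        rw [← Real.sqrt_inv, ← Real.sqrt_mul (by positivity)]
        congr 1
        field_simp

/-- Lower half of the sandwich. The Gaussian mixture, multiplied by `1 - ε`, lies below the
integrand wherever the weight is at least `1 - ε`; elsewhere `w` stays in a compact set avoiding `1`, and subtracting finitely
many exponentials of negligible mean makes the minorant negative. -/
lemma exists_lower (hβ0 : 0 < β) (hβ1 : β < 1) (hκ : 0 ≤ κ)
    (hprob : ∀ N, IsProbabilityMeasure (ν N)) (hpos : ∀ N, 0 < N → ∀ᵐ w ∂ν N, 0 < w)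
    (hL : ∀ N, 0 < N → ∀ p : ℝ, 0 < p →
      ∫ w, Real.exp (-(N * β * p * w)) ∂ν N = Real.exp (-(N * p ^ β)))
    {ε b : ℝ} (hε : 0 < ε) (hε1 : ε < 1) (hb0 : 0 < b) (hb : b < β * (1 - β)) :
    ∃ U : ℝ → ℝ, Tendsto U atTop (𝓝 ((1 - ε) * √(β ^ 2 / b / (β ^ 2 / b - b)))) ∧
      ∀ᶠ N in atTop, U N ≤ ∫ w, w ^ κ * Real.exp (N * (2 - β - w ^ β)) ∂ν N := by
  obtain ⟨c, hc⟩ : ∃ c, c = β ^ 2 / b := ⟨_, rfl⟩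
  have hc0 : 0 < c := hc ▸ by positivity
  have hbc : b < c := by rw [hc, lt_div_iff₀ hb0]; nlinarith
  have hβc : β ^ 2 / c = b := by rw [hc]; field_simp
  rw [← hc]
  obtain ⟨δ₀, hδ₀, hloc₀⟩ := Metric.eventually_nhds_iff_ball.1
    (rate_compare (β := β) (b := b) (σ := -1) (by linarith))
  have hwt : ∀ᶠ w in 𝓝 (1:ℝ), 1 - ε ≤ w ^ κ := by
    have : ContinuousAt (fun w : ℝ => w ^ κ) 1 :=
      Real.continuousAt_rpow_const _ _ (Or.inl one_ne_zero)
    exact this.eventually (le_mem_nhds (by simpa using hε))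
  obtain ⟨δ₁, hδ₁, hwt₁⟩ := Metric.eventually_nhds_iff_ball.1 hwt
  obtain ⟨δ, hδ0, hδ⟩ := exists_between (lt_min hδ₀ (lt_min hδ₁ one_pos))
  have hδ1 : δ < δ₁ := hδ.trans_le ((min_le_right _ _).trans (min_le_left _ _))
  have hδ2 : δ < 1 := hδ.trans_le ((min_le_right _ _).trans (min_le_right _ _))
  have hloc : ∀ w, |w - 1| ≤ δ → b / 2 * (w - 1) ^ 2 ≤ 1 - β + β * w - w ^ β := fun w hw => by
    have := hloc₀ w (by
      rw [Metric.mem_ball, Real.dist_eq]; exact hw.trans_lt (hδ.trans_le (min_le_left _ _)))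
    linarith
  -- slopes so small that the mixture stays below the rate function outside `[1 - δ, 1 + δ]` too
  obtain ⟨η, hη0, hη⟩ := exists_between (lt_min hδ0 (show 0 < b / 2 * δ / β by positivity))
  have hηδ : η < δ := hη.trans_le (min_le_left _ _)
  have hη1 : η < 1 := hηδ.trans hδ2
  have hβη : β * η ≤ b / 2 * δ := by
    have := (hη.trans_le (min_le_right _ _)).le
    rw [le_div_iff₀ hβ0] at this
    linarith
  have hK : IsCompact (Icc 0 (1 - δ)) := isCompact_Icc
  obtain ⟨t, p, k, ht, hcov⟩ := exists_affine_cover hβ0 hβ1 hK (fun w hw => ⟨hw.1, by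
    rintro rfl; linarith [hw.2]⟩)
  let G : ℝ → ℝ := fun N => ∫ q in Icc (-η) η, Real.exp (-(N * (c - b) * q ^ 2 / 2))
  have hcb : 0 < c - b := sub_pos.2 hbc
  have hGt : Tendsto (fun N => √(N * (c - b) / (2 * Real.pi)) * G N) atTop (𝓝 1) :=
    (tendsto_Icc_gaussian hη0).comp (tendsto_id.atTop_mul_const hcb)
  refine ⟨fun N => (1 - ε) * ((√(N * (c - b) / (2 * Real.pi)) * G N) * √(c / (c - b)) -
    ∑ x ∈ t, Real.exp (-(N * (p x ^ β - k x)))), ?_, ?_⟩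
  · simpa using ((hGt.mul_const (√(c / (c - b)))).sub (tendsto_sum_affine ht)).const_mul (1 - ε)
  filter_upwards [eventually_ge_atTop 1] with N hN1
  have hN : 0 < N := by linarith
  have := hprob N
  have hE := le_integral_gaussMix hβ0 hN hc0 hη1 (hpos N hN) (hL N hN)
    (fun w hw => hloc w (hw.trans hηδ.le))
  set s := √(2 * Real.pi / (N * c)) with hs
  have hs0 : 0 < s := Real.sqrt_pos.2 (by positivity)
  have hi1 := (integrable_gaussMix (c := c) hβ0 hN hc0 hη1 (hpos N hN)).const_mul s⁻¹
  have hi2 := integrable_finsetSum t (fun x hx =>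
    integrable_exp_affine hβ0 hN (hpos N hN) (ht x hx).1 (k x))
  calc _ ≤ (1 - ε) * (s⁻¹ * ∫ w, gaussMix β N c η w ∂ν N -
          ∑ x ∈ t, Real.exp (-(N * (p x ^ β - k x)))) := by
        refine mul_le_mul_of_nonneg_left (sub_le_sub_right ?_ _) (by linarith)
        refine le_trans (le_of_eq ?_) (mul_le_mul_of_nonneg_left hE (by positivity))
        rw [mul_right_comm, ← Real.sqrt_mul (by positivity), hs, ← Real.sqrt_inv]
        congr 2
        field_simp
    _ = ∫ w, (1 - ε) * (s⁻¹ * gaussMix β N c η w -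
          ∑ x ∈ t, Real.exp (N * (k x - β * p x * w))) ∂ν N := by
        rw [integral_const_mul, integral_sub hi1 hi2, integral_const_mul,
          integral_finsetSum _ (fun x hx =>
            integrable_exp_affine hβ0 hN (hpos N hN) (ht x hx).1 (k x))]
        rw [Finset.sum_congr rfl fun x hx => integral_exp_affine (hL N hN) (ht x hx).1 (k x)]
    _ ≤ _ := by
        refine integral_mono_ae ((hi1.sub hi2).const_mul _)
          (integrable_target hβ0 hN1 hκ (hpos N hN)) ?_
        filter_upwards [hpos N hN] with w hw
        have hmix : s⁻¹ * gaussMix β N c η w ≤ Real.exp (N * (2 - β - w ^ β)) := by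
          rw [inv_mul_le_iff₀ hs0, mul_comm s]
          rcases le_total |w - 1| δ with h | h
          · refine (gaussMix_le hN hc0).trans (mul_le_mul_of_nonneg_right ?_ hs0.le)
            rw [hβc, Real.exp_le_exp]
            have := mul_le_mul_of_nonneg_left (hloc w h) hN.le
            linarith
          · refine (gaussMix_le' hβ0 hN hc0).trans (mul_le_mul_of_nonneg_right ?_ hs0.le)
            rw [Real.exp_le_exp]
            have h1 := rate_ge_far hβ0 hβ1 hδ0 hloc hw h
            have h2 := mul_le_mul_of_nonneg_right hβη (abs_nonneg (w - 1))
            have := mul_le_mul_of_nonneg_left (h2.trans h1) hN.le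
            linarith
        have hsum : 0 ≤ ∑ x ∈ t, Real.exp (N * (k x - β * p x * w)) := by positivity
        rcases le_total w (1 - δ) with h | h
        · obtain ⟨x, hx, hle⟩ := hcov w ⟨hw.le, h⟩
          have a1 : Real.exp (N * (2 - β - w ^ β)) ≤
              ∑ x ∈ t, Real.exp (N * (k x - β * p x * w)) := by
            refine le_trans ?_ (Finset.single_le_sum
              (f := fun x => Real.exp (N * (k x - β * p x * w)))
              (fun _ _ => (Real.exp_pos _).le) hx)
            rw [Real.exp_le_exp]
            exact mul_le_mul_of_nonneg_left hle hN.le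
          refine le_trans ?_ (show 0 ≤ w ^ κ * Real.exp (N * (2 - β - w ^ β)) by positivity)
          exact mul_nonpos_of_nonneg_of_nonpos (by linarith) (by linarith)
        · have a1 : 1 - ε ≤ w ^ κ := by
            rcases le_total w 1 with h1 | h1
            · refine hwt₁ w ?_
              rw [Metric.mem_ball, Real.dist_eq, abs_lt]
              constructor <;> linarith
            · linarith [Real.one_le_rpow h1 hκ]
          calc _ ≤ (1 - ε) * Real.exp (N * (2 - β - w ^ β)) :=
                mul_le_mul_of_nonneg_left (by linarith) (by linarith)
            _ ≤ _ := mul_le_mul_of_nonneg_right a1 (Real.exp_pos _).le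

/-- Laplace method for the rescaled stable laws, obtained by letting the parabola coefficient `b`
tend to `β (1 - β)` and the weight error tend to `0` simultaneously in the two halves of the
sandwich. -/
lemma tendsto_laplace (hβ0 : 0 < β) (hβ1 : β < 1) (hκ : 0 ≤ κ)
    (hprob : ∀ N, IsProbabilityMeasure (ν N)) (hpos : ∀ N, 0 < N → ∀ᵐ w ∂ν N, 0 < w)
    (hL : ∀ N, 0 < N → ∀ p : ℝ, 0 < p →
      ∫ w, Real.exp (-(N * β * p * w)) ∂ν N = Real.exp (-(N * p ^ β))) :
    Tendsto (fun N => ∫ w, w ^ κ * Real.exp (N * (2 - β - w ^ β)) ∂ν N) atTop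
      (𝓝 ((β * (2 - β)) ^ (-(1 / 2 : ℝ)))) := by
  have hb : 0 < β * (1 - β) := mul_pos hβ0 (sub_pos.2 hβ1)
  let V : ℝ → ℝ := fun ε => (1 + ε) *
    √(β ^ 2 / (β * (1 - β) + ε) / (β ^ 2 / (β * (1 - β) + ε) - (β * (1 - β) + ε)))
  have h1 : (0:ℝ) < 1 - β := sub_pos.2 hβ1
  have hne : β ^ 2 / (β * (1 - β) + 0) - (β * (1 - β) + 0) ≠ 0 := by
    have : β ^ 2 / (β * (1 - β) + 0) - (β * (1 - β) + 0) = β * (β * (2 - β)) / (1 - β) := by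
      field_simp; ring
    rw [this]
    have : (0:ℝ) < 2 - β := by linarith
    positivity
  have hV0 : V 0 = (β * (2 - β)) ^ (-(1 / 2 : ℝ)) := by
    have h2 : (0:ℝ) < 2 - β := by linarith
    rw [Real.rpow_neg (by positivity), ← Real.sqrt_eq_rpow, ← Real.sqrt_inv]
    simp only [V, add_zero, one_mul]
    congr 1
    have : β ^ 2 / (β * (1 - β)) - β * (1 - β) = β * (β * (2 - β)) / (1 - β) := by
      field_simp; ring
    rw [this]
    field_simp
  have hVc : ContinuousAt V 0 := by
    have : β * (1 - β) + 0 ≠ 0 := by linarith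
    fun_prop (disch := assumption)
  rw [← hV0, tendsto_order]
  constructor
  · intro L hLV
    have e1 : ∀ᶠ ε in 𝓝[<] (0:ℝ), L < V ε :=
      (hVc.eventually (lt_mem_nhds hLV)).filter_mono nhdsWithin_le_nhds
    have e2 : ∀ᶠ ε in 𝓝[<] (0:ℝ), max (-1) (-(β * (1 - β))) < ε :=
      (lt_mem_nhds (max_lt (by norm_num) (by linarith))).filter_mono nhdsWithin_le_nhds
    obtain ⟨ε, hε1, hε2, hε3⟩ := (e1.and (e2.and self_mem_nhdsWithin)).exists
    replace hε3 : ε < 0 := hε3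
    obtain ⟨hε4, hε5⟩ := max_lt_iff.1 hε2
    obtain ⟨U, hU, hle⟩ := exists_lower (ε := -ε) (b := β * (1 - β) + ε) hβ0 hβ1 hκ hprob hpos hL
      (by linarith) (by linarith) (by linarith) (by linarith)
    rw [sub_neg_eq_add] at hU
    filter_upwards [hU.eventually (lt_mem_nhds hε1), hle] with N h1 h2 using h1.trans_le h2
  · intro L hLV
    have e1 : ∀ᶠ ε in 𝓝[>] (0:ℝ), V ε < L :=
      (hVc.eventually (gt_mem_nhds hLV)).filter_mono nhdsWithin_le_nhds
    have e2 : ∀ᶠ ε in 𝓝[>] (0:ℝ), ε < β ^ 2 :=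
      (gt_mem_nhds (by positivity)).filter_mono nhdsWithin_le_nhds
    obtain ⟨ε, hε1, hε2, hε3⟩ := (e1.and (e2.and self_mem_nhdsWithin)).exists
    replace hε3 : 0 < ε := hε3
    obtain ⟨U, hU, hle⟩ := exists_upper (ε := ε) (b := β * (1 - β) + ε) hβ0 hβ1 hκ hprob hpos hL
      hε3 (by linarith) (by nlinarith)
    filter_upwards [hU.eventually (gt_mem_nhds hε1), hle] with N h1 h2 using h2.trans_lt h1

end Limit

/-! ### Rescaling the kernel -/

/-- The scale `β N ^ ((β - 1) / β)` around which the `β`-stable law concentrates after exponential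
tilting with parameter `N ^ (1 / β)`. -/
noncomputable def stableScale (β N : ℝ) : ℝ := β * N ^ ((β - 1) / β)

lemma stableScale_pos {β N : ℝ} (hβ0 : 0 < β) (hN : 0 < N) : 0 < stableScale β N :=
  mul_pos hβ0 (Real.rpow_pos_of_pos hN _)

lemma laplace_rescaled {β : ℝ} (hβ0 : 0 < β) {μ : Measure ℝ}
    (hlap : ∀ r : ℝ, 0 < r → ∫ s, Real.exp (-(r * s)) ∂μ = Real.exp (-(r ^ β)))
    {N p : ℝ} (hN : 0 < N) (hp : 0 < p) :
    ∫ w, Real.exp (-(N * β * p * w)) ∂(μ.map fun s => s / stableScale β N) =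
      Real.exp (-(N * p ^ β)) := by
  rw [integral_map (by fun_prop) (by fun_prop)]
  have h1 : N ^ (1 / β) * N ^ ((β - 1) / β) = N := by
    rw [← Real.rpow_add hN, ← add_div, add_sub_cancel, div_self hβ0.ne', Real.rpow_one]
  have h2 : 0 < N ^ ((β - 1) / β) := Real.rpow_pos_of_pos hN _
  have e : ∀ s, Real.exp (-(N * β * p * (s / stableScale β N))) =
      Real.exp (-(p * N ^ (1 / β) * s)) := fun s => by
    congr 2
    unfold stableScale
    nth_rw 1 [← h1]
    field_simp
  simp_rw [e]
  rw [hlap _ (by positivity), Real.mul_rpow hp.le (by positivity), ← Real.rpow_mul hN.le,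
    one_div_mul_cancel hβ0.ne', Real.rpow_one, mul_comm]

/-- The large parameter of the expansion, as a function of the distance `D` and the time `t`. -/
noncomputable def largeParam (β D t : ℝ) : ℝ :=
  2 ^ (-(2 / (2 - β))) * β ^ (β / (2 - β)) * D ^ (2 / (2 - β)) * t ^ (-(β / (2 - β)))

lemma log_largeParam {β D t : ℝ} (hβ0 : 0 < β) (hD : 0 < D) (ht : 0 < t) :
    Real.log (largeParam β D t) = -(2 / (2 - β)) * Real.log 2 + β / (2 - β) * Real.log β +
      2 / (2 - β) * Real.log D - β / (2 - β) * Real.log t := by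
  unfold largeParam
  rw [Real.log_mul (by positivity) (by positivity), Real.log_mul (by positivity) (by positivity),
    Real.log_mul (by positivity) (by positivity), Real.log_rpow (by positivity),
    Real.log_rpow (by positivity), Real.log_rpow (by positivity), Real.log_rpow (by positivity)]
  ring

lemma largeParam_pos {β D t : ℝ} (hβ0 : 0 < β) (hD : 0 < D) (ht : 0 < t) :
    0 < largeParam β D t := by
  unfold largeParam; positivity

lemma log_stableScale {β D t : ℝ} (hβ0 : 0 < β) (hD : 0 < D) (ht : 0 < t) :
    Real.log (stableScale β (largeParam β D t)) = Real.log β + (β - 1) / β *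
      (-(2 / (2 - β)) * Real.log 2 + β / (2 - β) * Real.log β +
      2 / (2 - β) * Real.log D - β / (2 - β) * Real.log t) := by
  have := largeParam_pos hβ0 hD ht
  rw [stableScale, Real.log_mul hβ0.ne' (by positivity), Real.log_rpow this,
    log_largeParam hβ0 hD ht]

/-- In the rescaled variable the Gauss exponent is `N w ^ β` with `N` the large parameter. -/
lemma exponent_eq {β D t s : ℝ} (hβ0 : 0 < β) (hβ1 : β < 1) (hD : 0 < D) (ht : 0 < t)
    (hs : 0 < s) :
    D ^ 2 * s ^ β / (4 * t ^ β) =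
      largeParam β D t * (s / stableScale β (largeParam β D t)) ^ β := by
  have hN := largeParam_pos hβ0 hD ht
  have hS := stableScale_pos hβ0 hN
  have h4 : Real.log 4 = 2 * Real.log 2 := by
    rw [show (4:ℝ) = 2 ^ 2 by norm_num, Real.log_pow]; norm_num
  have h2 : 2 - β ≠ 0 := by linarith
  apply Real.log_injOn_pos (mem_Ioi.2 (by positivity)) (mem_Ioi.2 (by positivity))
  rw [Real.log_div (by positivity) (by positivity), Real.log_mul (by positivity) (by positivity),
    Real.log_mul (by positivity) (by positivity), Real.log_mul (by positivity) (by positivity),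
    Real.log_pow, Real.log_rpow hs, Real.log_rpow ht, Real.log_rpow (by positivity),
    Real.log_div hs.ne' hS.ne', log_stableScale hβ0 hD ht, log_largeParam hβ0 hD ht, h4]
  push_cast
  field_simp
  ring

/-- In the rescaled variable the Gauss prefactor splits into the algebraic factors of the claimed
asymptotics and the weight `w ^ (β d / 2)`. -/
lemma prefactor_eq {β D t s d : ℝ} (hβ0 : 0 < β) (hβ1 : β < 1) (hD : 0 < D) (ht : 0 < t)
    (hs : 0 < s) :
    (4 * Real.pi * (t ^ β * s ^ (-β))) ^ (-(d / 2)) =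
      Real.pi ^ (-(d / 2)) * 2 ^ (-(d / (2 - β))) * β ^ (d * β / (2 * (2 - β))) *
        D ^ (-(d * (1 - β) / (2 - β))) * t ^ (-(d * β / (2 * (2 - β)))) *
        (s / stableScale β (largeParam β D t)) ^ (β * d / 2) := by
  have hN := largeParam_pos hβ0 hD ht
  have hS := stableScale_pos hβ0 hN
  have h4 : Real.log 4 = 2 * Real.log 2 := by
    rw [show (4:ℝ) = 2 ^ 2 by norm_num, Real.log_pow]; norm_num
  have h2 : 2 - β ≠ 0 := by linarith
  have hpi := Real.pi_pos
  apply Real.log_injOn_pos (mem_Ioi.2 (by positivity)) (mem_Ioi.2 (by positivity))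
  rw [Real.log_rpow (by positivity), Real.log_mul (by positivity) (by positivity),
    Real.log_mul (by positivity) (by positivity), Real.log_mul (by positivity) (by positivity),
    Real.log_mul (by positivity) (by positivity), Real.log_mul (by positivity) (by positivity),
    Real.log_mul (by positivity) (by positivity), Real.log_mul (by positivity) (by positivity),
    Real.log_mul (by positivity) (by positivity),
    Real.log_rpow ht, Real.log_rpow hs, Real.log_rpow (by positivity), Real.log_rpow (by positivity),
    Real.log_rpow (by positivity), Real.log_rpow (by positivity), Real.log_rpow (by positivity),
    Real.log_rpow (by positivity),
    Real.log_div hs.ne' hS.ne', log_stableScale hβ0 hD ht, h4]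
  field_simp
  ring

lemma largeParam_eq {β D t : ℝ} (hβ0 : 0 < β) (hβ1 : β < 1) (hD : 0 < D) (ht : 0 < t) :
    largeParam β D t =
      2 ^ (-(2 / (2 - β))) * β ^ (β / (2 - β)) * (D ^ (-(2 / β)) * t) ^ (-(β / (2 - β))) := by
  have h2 : 2 - β ≠ 0 := by linarith
  rw [Real.mul_rpow (by positivity) ht.le, ← Real.rpow_mul hD.le,
    show -(2 / β) * -(β / (2 - β)) = 2 / (2 - β) by field_simp, largeParam]
  ring

theorem stmt_8
    (β : ℝ) (hβ0 : 0 < β) (hβ1 : β < 1)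
    (μ : Measure ℝ) (hprob : IsProbabilityMeasure μ)
    (hsupp : μ (Set.Iic 0) = 0)
    (hlap : ∀ r : ℝ, 0 < r →
      ∫ s in Set.Ioi (0:ℝ), Real.exp (-(r * s)) ∂μ = Real.exp (-(r ^ β)))
    (d : ℕ) (hd : 1 ≤ d)
    (pSinv : ℝ → EuclideanSpace ℝ (Fin d) → EuclideanSpace ℝ (Fin d) → ℝ)
    (hpSinv : ∀ t : ℝ, 0 < t → ∀ x y : EuclideanSpace ℝ (Fin d),
      pSinv t x y = ∫ s in Set.Ioi (0:ℝ),
        (4 * Real.pi * (t ^ β * s ^ (-β))) ^ (-((d:ℝ)/2)) *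
          Real.exp (-(dist x y ^ 2 * s ^ β / (4 * t ^ β))) ∂μ) :
    ∀ ε : ℝ, 0 < ε → ∃ δ : ℝ, 0 < δ ∧ ∀ t : ℝ, 0 < t →
      ∀ x y : EuclideanSpace ℝ (Fin d), x ≠ y →
      dist x y ^ (-(2/β)) * t ≤ δ →
      |pSinv t x y /
        (((β * (2 - β)) ^ (-(1/2 : ℝ)) * Real.pi ^ (-((d:ℝ)/2)) *
            2 ^ (-((d:ℝ)/(2 - β))) * β ^ ((d:ℝ) * β/(2 * (2 - β)))) *
          dist x y ^ (-((d:ℝ) * (1 - β)/(2 - β))) *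
          t ^ (-((d:ℝ) * β/(2 * (2 - β)))) *
          Real.exp (-(((2 - β) * 2 ^ (-(2/(2 - β))) * β ^ (β/(2 - β))) *
            dist x y ^ (2/(2 - β)) * t ^ (-(β/(2 - β)))))) - 1| ≤ ε := by
  intro ε hε
  have hpos : ∀ᵐ s ∂μ, 0 < s := by
    rw [ae_iff]
    simp only [not_lt]
    exact hsupp
  have hres : μ.restrict (Ioi 0) = μ := Measure.restrict_eq_self_of_ae_mem hpos
  rw [hres] at hlap hpSinv
  have h2β : 0 < 2 - β := by linarith
  let ν : ℝ → Measure ℝ := fun N => μ.map fun s => s / stableScale β N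
  let κ : ℝ := β * d / 2
  let J : ℝ → ℝ := fun N => ∫ w, w ^ κ * Real.exp (N * (2 - β - w ^ β)) ∂ν N
  set V : ℝ := (β * (2 - β)) ^ (-(1 / 2 : ℝ)) with hV
  have hV0 : 0 < V := by positivity
  have hJ : Tendsto J atTop (𝓝 V) := by
    refine tendsto_laplace hβ0 hβ1 (by positivity)
      (fun N => Measure.isProbabilityMeasure_map (by fun_prop)) (fun N hN => ?_)
      (fun N hN p hp => laplace_rescaled hβ0 hlap hN hp)
    rw [ae_map_iff (by fun_prop) measurableSet_Ioi]
    filter_upwards [hpos] with s hs using div_pos hs (stableScale_pos hβ0 hN)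
  have hlarge : Tendsto (fun u : ℝ => 2 ^ (-(2 / (2 - β))) * β ^ (β / (2 - β)) *
      u ^ (-(β / (2 - β)))) (𝓝[>] 0) atTop :=
    (tendsto_rpow_neg_nhdsGT_zero (neg_neg_of_pos (div_pos hβ0 h2β))).const_mul_atTop
      (by positivity)
  have hev := (hJ.comp hlarge).eventually (Metric.closedBall_mem_nhds V (mul_pos hε hV0))
  obtain ⟨δ, hδ0, hδ⟩ := mem_nhdsGT_iff_exists_Ioc_subset.1 hev
  refine ⟨δ, hδ0, fun t ht x y hxy hle => ?_⟩
  have hD : 0 < dist x y := dist_pos.2 hxy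
  rw [hpSinv t ht x y]
  generalize dist x y = D at *
  have hJN := hδ ⟨by positivity, hle⟩
  simp only [mem_ofPred_eq, Real.dist_eq, Function.comp,
    ← largeParam_eq hβ0 hβ1 hD ht] at hJN
  set N := largeParam β D t with hN
  set X : ℝ := Real.pi ^ (-((d:ℝ)/2)) * 2 ^ (-((d:ℝ)/(2 - β))) *
    β ^ ((d:ℝ) * β/(2 * (2 - β))) * D ^ (-((d:ℝ) * (1 - β)/(2 - β))) *
    t ^ (-((d:ℝ) * β/(2 * (2 - β)))) * Real.exp (-(N * (2 - β))) with hX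
  have hX0 : 0 < X := by positivity
  have hnum : ∫ s, (4 * Real.pi * (t ^ β * s ^ (-β))) ^ (-((d:ℝ)/2)) *
      Real.exp (-(D ^ 2 * s ^ β / (4 * t ^ β))) ∂μ = X * J N := by
    simp only [J, ν]
    rw [integral_map (by fun_prop) (Measurable.aestronglyMeasurable (by fun_prop)),
      ← integral_const_mul]
    refine integral_congr_ae ?_
    filter_upwards [hpos] with s hs
    rw [prefactor_eq hβ0 hβ1 hD ht hs, exponent_eq hβ0 hβ1 hD ht hs, ← hN, hX]
    have e : ∀ z, Real.exp (-(N * z)) =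
        Real.exp (-(N * (2 - β))) * Real.exp (N * (2 - β - z)) := fun z => by
      rw [← Real.exp_add]; congr 1; ring
    rw [e]
    ring
  have hden : (V * Real.pi ^ (-((d:ℝ)/2)) * 2 ^ (-((d:ℝ)/(2 - β))) *
      β ^ ((d:ℝ) * β/(2 * (2 - β)))) * D ^ (-((d:ℝ) * (1 - β)/(2 - β))) *
      t ^ (-((d:ℝ) * β/(2 * (2 - β)))) *
      Real.exp (-(((2 - β) * 2 ^ (-(2/(2 - β))) * β ^ (β/(2 - β))) *
        D ^ (2/(2 - β)) * t ^ (-(β/(2 - β))))) = X * V := by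
    have e : ((2 - β) * 2 ^ (-(2/(2 - β))) * β ^ (β/(2 - β))) *
        D ^ (2/(2 - β)) * t ^ (-(β/(2 - β))) = N * (2 - β) := by
      rw [hN, largeParam]; ring
    rw [e, hX]
    ring
  rw [hnum, hden, mul_div_mul_left _ _ hX0.ne', div_sub_one hV0.ne', abs_div, abs_of_pos hV0,
    div_le_iff₀ hV0]
  exact hJN
end

section
/- Let p^S(t,x,y) = ∫_{(0,∞)} c(d) t^{1/β} s / ((t^{1/β} s)² + |x-y|²)^{(d+1)/2} μ_β(ds) be the β-stable subordinate Cauchy kernel on ℝ^d, where c(d) = π^{-(d+1)/2} Γ((d+1)/2). Then, as |x-y| t^{-1/β} → ∞, p^S(t,x,y) ∼ (β 2^{β-1} Γ((d+β)/2) / (π^{d/2} Γ(1 - β/2))) |x-y|^{-d-β} t; that is, for every ε > 0 there exists R > 0 such that whenever t > 0, x, y ∈ ℝ^d and |x-y| t^{-1/β} ≥ R, the ratio of the two sides lies within ε of 1. -/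
/-!
The argument is Karamata's proof of a Tauberian theorem. Write `q = (d + 1) / 2`,
`c = π ^ (-q) Γ(q)`, and let `l = |x - y| t ^ (-1/β)`. Scaling (`integrand_scaling`) gives
`pS t x y = |x - y| ^ (-d - β) t c ∫ l ^ β h(s / l) μ(ds)` with `h(u) = u / (u² + 1) ^ q`, so
everything reduces to the limit of `∫ l ^ β h(s / l) μ(ds)` as `l → ∞`.

Factor `h(u) = (1 - e ^ (-u)) G(e ^ (-u))`. The function `G` (`profile`) is continuous on the closed
interval `[0, 1]`, and the weights `l ^ β (1 - e ^ (-s / l))` have bounded total mass. By the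
Weierstrass approximation theorem (`tendsto_integral_weight`) it suffices to treat `G(x) = x ^ k`,
where the Laplace transform of `μ` gives
`l ^ β (e ^ (-(k / l) ^ β) - e ^ (-((k + 1) / l) ^ β)) → (k + 1) ^ β - k ^ β`. By `integral_levy` this
is the integral of `(1 - e ^ (-u)) e ^ (-k u)` against the Lévy density
`β / Γ(1 - β) u ^ (-1 - β)`. Hence the limit is `β / Γ(1 - β) ∫ h(u) u ^ (-1 - β) du`, a Beta
integral (`integral_beta`), and Legendre's duplication formula brings it into the stated form
(`constant_eq`).
-/

open MeasureTheory Set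
open Filter Topology

namespace StableCauchy

/-! ### The Lévy and Beta integrals -/

lemma integrableOn_levy {β b : ℝ} (hβ0 : 0 < β) (hβ1 : β < 1) (hb : 0 ≤ b) :
    IntegrableOn (fun u : ℝ => (1 - Real.exp (-(b * u))) * u ^ (-β - 1)) (Ioi 0) := by
  have hc : ContinuousOn (fun u : ℝ => (1 - Real.exp (-(b * u))) * u ^ (-β - 1)) (Ioi 0) := by
    apply ContinuousOn.mul (by fun_prop)
    exact ContinuousOn.rpow_const continuousOn_id fun x hx => Or.inl (ne_of_gt hx)
  -- The integrand is at most `b u ^ (-β)` on `(0, 1]` and at most `u ^ (-β - 1)` beyond `1`.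
  rw [← Ioc_union_Ioi_eq_Ioi (zero_le_one' ℝ)]
  apply IntegrableOn.union
  · have h1 : IntegrableOn (fun u : ℝ => b * u ^ (-β)) (Ioc 0 1) := by
      have := intervalIntegral.intervalIntegrable_rpow' (a := 0) (b := 1) (r := -β) (by linarith)
      rw [intervalIntegrable_iff_integrableOn_Ioc_of_le zero_le_one] at this
      exact this.const_mul b
    refine Integrable.mono' h1
      ((hc.mono Ioc_subset_Ioi_self).aestronglyMeasurable measurableSet_Ioc) ?_
    refine (ae_restrict_iff' measurableSet_Ioc).2 (Eventually.of_forall fun u hu => ?_)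
    have hu0 : 0 < u := hu.1
    have he : Real.exp (-(b * u)) ≤ 1 := Real.exp_le_one_iff.2 (by nlinarith [mul_nonneg hb hu0.le])
    have he' : 1 - Real.exp (-(b * u)) ≤ b * u := by linarith [Real.add_one_le_exp (-(b * u))]
    have hp : 0 < u ^ (-β - 1) := Real.rpow_pos_of_pos hu0 _
    rw [Real.norm_of_nonneg (mul_nonneg (by linarith) hp.le)]
    calc _ ≤ b * u * u ^ (-β - 1) := by gcongr
      _ = b * u ^ (-β) := by
        rw [Real.rpow_sub_one hu0.ne']; field_simp
  · have h1 : IntegrableOn (fun u : ℝ => u ^ (-β - 1)) (Ioi 1) :=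
      integrableOn_Ioi_rpow_of_lt (by linarith) one_pos
    refine Integrable.mono' h1
      ((hc.mono (Ioi_subset_Ioi zero_le_one)).aestronglyMeasurable measurableSet_Ioi) ?_
    refine (ae_restrict_iff' measurableSet_Ioi).2 (Eventually.of_forall fun u hu => ?_)
    have hu0 : 0 < u := lt_trans one_pos hu
    have he : Real.exp (-(b * u)) ≤ 1 := Real.exp_le_one_iff.2 (by nlinarith [mul_nonneg hb hu0.le])
    have hp : 0 < u ^ (-β - 1) := Real.rpow_pos_of_pos hu0 _
    rw [Real.norm_of_nonneg (mul_nonneg (by linarith) hp.le)]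
    have := Real.exp_pos (-(b * u))
    nlinarith

/-- The Lévy–Khintchine representation of `b ^ β`, up to the factor `Γ(1 - β) / β`; integrating
`u ^ (-β - 1)` by parts turns the left side into a Gamma integral. -/
lemma integral_levy {β b : ℝ} (hβ0 : 0 < β) (hβ1 : β < 1) (hb : 0 ≤ b) :
    ∫ u in Ioi (0:ℝ), (1 - Real.exp (-(b * u))) * u ^ (-β - 1) =
      Real.Gamma (1 - β) / β * b ^ β := by
  rcases hb.eq_or_lt with rfl | hb0
  · simp [Real.zero_rpow hβ0.ne']
  have hv0 : Tendsto (fun x : ℝ => b / β * x ^ (1 - β)) (𝓝[>] 0) (𝓝 0) := by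
    have : ContinuousAt (fun x : ℝ => b / β * x ^ (1 - β)) 0 :=
      (Real.continuousAt_rpow_const 0 (1 - β) (Or.inr (by linarith))).const_mul _
    have := this.tendsto
    simp only [Real.zero_rpow (by linarith : 1 - β ≠ 0), mul_zero] at this
    exact this.mono_left nhdsWithin_le_nhds
  have key := integral_Ioi_mul_deriv_eq_deriv_mul (a := (0:ℝ)) (a' := 0) (b' := 0)
    (u := fun x : ℝ => 1 - Real.exp (-(b * x))) (u' := fun x => b * Real.exp (-(b * x)))
    (v := fun x : ℝ => -(x ^ (-β) / β)) (v' := fun x => x ^ (-β - 1)) ?_ ?_ ?_ ?_ ?_ ?_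
  · rw [key]
    have := Real.integral_rpow_mul_exp_neg_mul_Ioi (a := 1 - β) (r := b) (by linarith) hb0
    have h2 : ∀ x : ℝ, b * Real.exp (-(b * x)) * -(x ^ (-β) / β) =
        -(b / β) * (x ^ (1 - β - 1) * Real.exp (-(b * x))) := by
      intro x; rw [show 1 - β - 1 = -β by ring]; ring
    simp_rw [h2]
    rw [integral_const_mul, this, one_div, Real.inv_rpow hb0.le, ← Real.rpow_neg hb0.le,
      show -(1 - β) = β - 1 by ring, Real.rpow_sub_one hb0.ne']
    field_simp; ring
  · intro x _
    have := (((hasDerivAt_id x).const_mul b).neg.exp).const_sub 1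
    convert! this using 1
    simp; ring
  · intro x hx
    have := ((Real.hasDerivAt_rpow_const (x := x) (p := -β) (Or.inl (ne_of_gt hx))).div_const β).neg
    convert! this using 1
    field_simp
  · exact integrableOn_levy hβ0 hβ1 hb
  · have h := (integrableOn_rpow_mul_exp_neg_mul_rpow (s := -β) (p := 1) (b := b)
      (by linarith) one_pos hb0).const_mul (-(b / β))
    refine (integrableOn_congr_fun (fun x _ => ?_) measurableSet_Ioi).1 h
    simp; ring
  · refine squeeze_zero_norm' ?_ hv0
    filter_upwards [self_mem_nhdsWithin] with x (hx : 0 < x)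
    have he : Real.exp (-(b * x)) ≤ 1 := Real.exp_le_one_iff.2 (by nlinarith [mul_pos hb0 hx])
    have he' : 1 - Real.exp (-(b * x)) ≤ b * x := by linarith [Real.add_one_le_exp (-(b * x))]
    have hp : 0 < x ^ (-β) := Real.rpow_pos_of_pos hx _
    simp only [Pi.mul_apply, norm_mul, norm_neg, norm_div]
    rw [Real.norm_of_nonneg (by linarith), Real.norm_of_nonneg hp.le, Real.norm_of_nonneg hβ0.le]
    calc _ ≤ b * x * (x ^ (-β) / β) := by gcongr
      _ = _ := by
        rw [show 1 - β = -β + 1 by ring, Real.rpow_add_one hx.ne']; ring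
  · have h0 : Tendsto (fun x : ℝ => x ^ (-β) / β) atTop (𝓝 0) := by
      simpa using (tendsto_rpow_neg_atTop hβ0).div_const β
    refine squeeze_zero_norm' ?_ h0
    filter_upwards [eventually_gt_atTop 0] with x hx
    have he : Real.exp (-(b * x)) ≤ 1 := Real.exp_le_one_iff.2 (by nlinarith [mul_pos hb0 hx])
    have hp : 0 < x ^ (-β) / β := div_pos (Real.rpow_pos_of_pos hx _) hβ0
    simp only [Pi.mul_apply, norm_mul, norm_neg]
    rw [Real.norm_of_nonneg (by linarith), Real.norm_of_nonneg hp.le]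
    have := Real.exp_pos (-(b * x))
    nlinarith

/-- A Beta integral in Gamma form, obtained by writing `Γ(q) (u² + 1) ^ (-q)` as
`∫ x ^ (q - 1) e ^ (-(u² + 1) x) dx` and exchanging the order of integration. -/
lemma integral_beta {β q : ℝ} (hβ1 : β < 1) (hβ0 : 0 < β) (hq : 1 ≤ q) :
    Real.Gamma q * ∫ u in Ioi (0:ℝ), u ^ (-β) / (u ^ 2 + 1) ^ q =
      Real.Gamma ((1 - β) / 2) / 2 * Real.Gamma (q - (1 - β) / 2) := by
  let f : ℝ → ℝ → ℝ := fun u x => u ^ (-β) * (x ^ (q - 1) * Real.exp (-((u ^ 2 + 1) * x)))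
  have hin : ∀ x : ℝ, 0 < x → ∫ u in Ioi (0:ℝ), f u x =
      Real.Gamma ((1 - β) / 2) / 2 * (Real.exp (-x) * x ^ (q - (1 - β) / 2 - 1)) := by
    intro x hx
    have h := integral_rpow_mul_exp_neg_mul_rpow (p := 2) (q := -β) (b := x) two_pos
      (by linarith) hx
    have h2 : ∀ u : ℝ, f u x =
        (x ^ (q - 1) * Real.exp (-x)) * (u ^ (-β) * Real.exp (-x * u ^ (2:ℝ))) := by
      intro u
      simp only [f, Real.rpow_two]
      rw [show -((u ^ 2 + 1) * x) = -x + -x * u ^ 2 by ring, Real.exp_add]; ring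
    simp_rw [h2]
    rw [integral_const_mul, h, show q - (1 - β) / 2 - 1 = (q - 1) + -(-β + 1) / 2 by ring,
      Real.rpow_add hx, show (-β + 1) / 2 = (1 - β) / 2 by ring]
    ring
  have hout : ∀ u : ℝ, ∫ x in Ioi (0:ℝ), f u x =
      Real.Gamma q * (u ^ (-β) / (u ^ 2 + 1) ^ q) := by
    intro u
    have hu : 0 < u ^ 2 + 1 := by positivity
    simp only [f]
    rw [integral_const_mul, Real.integral_rpow_mul_exp_neg_mul_Ioi (by linarith) hu, one_div,
      Real.inv_rpow hu.le]
    ring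
  have hpos : ∀ u x : ℝ, 0 < u → 0 < x → 0 ≤ f u x := by
    intro u x hu hx; simp only [f]; positivity
  have hGam := Real.GammaIntegral_convergent (s := q - (1 - β) / 2) (by linarith)
  have hint : Integrable (Function.uncurry f)
      ((volume.restrict (Ioi (0:ℝ))).prod (volume.restrict (Ioi (0:ℝ)))) := by
    rw [integrable_prod_iff']
    · constructor
      · refine (ae_restrict_iff' measurableSet_Ioi).2 (Eventually.of_forall fun x hx => ?_)
        have h := (integrableOn_rpow_mul_exp_neg_mul_sq (b := x) hx (s := -β)
          (by linarith)).const_mul (x ^ (q - 1) * Real.exp (-x))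
        refine (integrableOn_congr_fun (fun u _ => ?_) measurableSet_Ioi).1 h
        simp only [f, Function.uncurry]
        rw [show -((u ^ 2 + 1) * x) = -x + -x * u ^ 2 by ring, Real.exp_add]; ring
      · refine (integrableOn_congr_fun (fun x hx => ?_) measurableSet_Ioi).1
          (hGam.const_mul (Real.Gamma ((1 - β) / 2) / 2))
        simp only [Function.uncurry]
        rw [← hin x hx]
        refine setIntegral_congr_fun measurableSet_Ioi fun u hu => ?_
        exact (Real.norm_of_nonneg (hpos u x hu hx)).symm
    · apply Measurable.aestronglyMeasurable
      simp only [f, Function.uncurry_def]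
      fun_prop
  have hswap := integral_integral_swap hint
  simp_rw [hout] at hswap
  rw [integral_const_mul] at hswap
  rw [hswap, setIntegral_congr_fun measurableSet_Ioi (fun x hx => hin x hx), integral_const_mul,
    Real.Gamma_eq_integral (s := q - (1 - β) / 2) (by linarith)]


/-! ### Reduction of test functions to polynomials -/

lemma integrableOn_weight_mul {μ : Measure ℝ} {w φ G : ℝ → ℝ} (hw : IntegrableOn w (Ioi 0) μ)
    (hφ : Continuous φ) (hφI : ∀ s, 0 < s → φ s ∈ Icc (0:ℝ) 1) (hG : ContinuousOn G (Icc 0 1)) :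
    IntegrableOn (fun s => w s * G (φ s)) (Ioi 0) μ := by
  obtain ⟨C, hC⟩ := isCompact_Icc.exists_bound_of_continuousOn hG
  refine Integrable.mul_bdd (c := C) hw
    ((hG.comp hφ.continuousOn fun s hs => hφI s hs).aestronglyMeasurable measurableSet_Ioi) ?_
  exact (ae_restrict_iff' measurableSet_Ioi).2 (Eventually.of_forall fun s hs => hC _ (hφI s hs))

lemma integral_weight_sub_le {μ : Measure ℝ} {w φ G H : ℝ → ℝ} {δ : ℝ}
    (hw : IntegrableOn w (Ioi 0) μ) (hw0 : ∀ s, 0 < s → 0 ≤ w s)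
    (hφ : Continuous φ) (hφI : ∀ s, 0 < s → φ s ∈ Icc (0:ℝ) 1)
    (hG : ContinuousOn G (Icc 0 1)) (hH : ContinuousOn H (Icc 0 1))
    (hGH : ∀ x ∈ Icc (0:ℝ) 1, |H x - G x| ≤ δ) :
    |∫ s in Ioi 0, w s * H (φ s) ∂μ - ∫ s in Ioi 0, w s * G (φ s) ∂μ| ≤
      δ * ∫ s in Ioi 0, w s ∂μ := by
  rw [← integral_sub (integrableOn_weight_mul hw hφ hφI hH)
    (integrableOn_weight_mul hw hφ hφI hG), ← integral_const_mul, ← Real.norm_eq_abs]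
  refine norm_integral_le_of_norm_le (hw.const_mul δ) ?_
  refine (ae_restrict_iff' measurableSet_Ioi).2 (Eventually.of_forall fun s hs => ?_)
  rw [← mul_sub, norm_mul, Real.norm_of_nonneg (hw0 s hs), mul_comm δ]
  exact mul_le_mul_of_nonneg_left (hGH _ (hφI s hs)) (hw0 s hs)

lemma integral_weight_polynomial {μ : Measure ℝ} {w φ : ℝ → ℝ} (hw : IntegrableOn w (Ioi 0) μ)
    (hφ : Continuous φ) (hφI : ∀ s, 0 < s → φ s ∈ Icc (0:ℝ) 1) (p : Polynomial ℝ) :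
    ∫ s in Ioi 0, w s * p.eval (φ s) ∂μ =
      ∑ k ∈ Finset.range (p.natDegree + 1), p.coeff k * ∫ s in Ioi 0, w s * φ s ^ k ∂μ := by
  simp_rw [← integral_const_mul]
  rw [← integral_finsetSum]
  · refine integral_congr_ae (Eventually.of_forall fun s => ?_)
    simp only [Polynomial.eval_eq_sum_range, Finset.mul_sum]
    exact Finset.sum_congr rfl fun k _ => by ring
  · intro k _
    exact (integrableOn_weight_mul (G := fun x => x ^ k) hw hφ hφI (by fun_prop)).const_mul _

/-- Method of moments on `[0, 1]`: if the weights `w l` pushed forward by `φ l` into `[0, 1]` have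
moments converging to those of `w₀` pushed forward by `φ₀`, then integrals of every continuous
function on `[0, 1]` converge. The zeroth moments bound the total masses. -/
lemma tendsto_integral_weight {μ ν : Measure ℝ} {w φ : ℝ → ℝ → ℝ} {w₀ φ₀ G : ℝ → ℝ}
    (hw : ∀ l, 0 < l → IntegrableOn (w l) (Ioi 0) μ) (hw0 : ∀ l, 0 < l → ∀ s, 0 < s → 0 ≤ w l s)
    (hφ : ∀ l, Continuous (φ l)) (hφI : ∀ l, 0 < l → ∀ s, 0 < s → φ l s ∈ Icc (0:ℝ) 1)
    (hw₀ : IntegrableOn w₀ (Ioi 0) ν) (hw₀0 : ∀ s, 0 < s → 0 ≤ w₀ s)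
    (hφ₀ : Continuous φ₀) (hφ₀I : ∀ s, 0 < s → φ₀ s ∈ Icc (0:ℝ) 1)
    (hmom : ∀ k : ℕ, Tendsto (fun l => ∫ s in Ioi 0, w l s * φ l s ^ k ∂μ) atTop
      (𝓝 (∫ s in Ioi 0, w₀ s * φ₀ s ^ k ∂ν)))
    (hG : ContinuousOn G (Icc 0 1)) :
    Tendsto (fun l => ∫ s in Ioi 0, w l s * G (φ l s) ∂μ) atTop
      (𝓝 (∫ s in Ioi 0, w₀ s * G (φ₀ s) ∂ν)) := by
  rw [Metric.tendsto_nhds]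
  intro ε hε
  set M := ∫ s in Ioi 0, w₀ s ∂ν with hM
  have hM0 : 0 ≤ M := setIntegral_nonneg measurableSet_Ioi hw₀0
  have hmass : Tendsto (fun l => ∫ s in Ioi 0, w l s ∂μ) atTop (𝓝 M) := by
    simpa using hmom 0
  obtain ⟨p, hp⟩ := exists_polynomial_near_of_continuousOn 0 1 G hG (ε / (4 * (M + 1)))
    (by positivity)
  have hp' : ∀ x ∈ Icc (0:ℝ) 1, |p.eval x - G x| ≤ ε / (4 * (M + 1)) := fun x hx => (hp x hx).le
  have hpc : ContinuousOn (fun x => p.eval x) (Icc (0:ℝ) 1) := p.continuous.continuousOn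
  have hpoly : Tendsto (fun l => ∫ s in Ioi 0, w l s * p.eval (φ l s) ∂μ) atTop
      (𝓝 (∫ s in Ioi 0, w₀ s * p.eval (φ₀ s) ∂ν)) := by
    rw [integral_weight_polynomial hw₀ hφ₀ hφ₀I]
    refine (tendsto_finsetSum _ fun k _ => (hmom k).const_mul (p.coeff k)).congr' ?_
    filter_upwards [eventually_gt_atTop 0] with l hl
    rw [integral_weight_polynomial (hw l hl) (hφ l) (hφI l hl)]
  have e1 := integral_weight_sub_le hw₀ hw₀0 hφ₀ hφ₀I hG hpc hp'
  rw [Metric.tendsto_nhds] at hpoly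
  filter_upwards [hpoly (ε / 4) (by positivity), hmass.eventually (gt_mem_nhds (lt_add_one M)),
    eventually_gt_atTop 0] with l h1 h2 hl
  have e2 := integral_weight_sub_le (hw l hl) (hw0 l hl) (hφ l) (hφI l hl) hG hpc hp'
  have b1 : ε / (4 * (M + 1)) * M ≤ ε / 4 := by
    rw [div_mul_eq_mul_div, div_le_div_iff₀ (by positivity) (by positivity)]; nlinarith
  have b2 : ε / (4 * (M + 1)) * ∫ s in Ioi 0, w l s ∂μ ≤ ε / 4 := by
    calc _ ≤ ε / (4 * (M + 1)) * (M + 1) := by gcongr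
      _ = ε / 4 := by field_simp
  rw [Real.dist_eq] at h1 ⊢
  rw [abs_lt] at h1 ⊢
  rw [abs_le] at e1 e2
  constructor <;> linarith

/-! ### The test function -/

/-- The function `G` on `[0, 1]` with `(1 - e ^ (-u)) G(e ^ (-u)) = u / (u² + 1) ^ q`, namely
`log x / ((x - 1) (log² x + 1) ^ q)`. The divided slope supplies the value `1` at `x = 1`, and the
convention `log 0 = 0` gives the correct limit value `0` at `x = 0`. -/
noncomputable def profile (q x : ℝ) : ℝ := dslope Real.log 1 x / (Real.log x ^ 2 + 1) ^ q

lemma one_sub_mul_profile {q u : ℝ} (hu : 0 < u) :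
    (1 - Real.exp (-u)) * profile q (Real.exp (-u)) = u / (u ^ 2 + 1) ^ q := by
  have h1 : Real.exp (-u) < 1 := Real.exp_lt_one_iff.2 (by linarith)
  rw [profile, dslope_of_ne _ h1.ne, slope_def_field, Real.log_exp, Real.log_one, neg_sq]
  have : Real.exp (-u) - 1 ≠ 0 := by linarith
  field_simp
  ring

lemma continuousOn_profile {q : ℝ} (hq : 1 ≤ q) : ContinuousOn (profile q) (Icc 0 1) := by
  have hden : ∀ y : ℝ, 0 < y ^ 2 + 1 := fun y => by positivity
  intro x hx
  rcases hx.1.eq_or_lt with rfl | hx0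
  -- At the endpoint `0`, `|G y|` is bounded by `2 / |log y|` because `q ≥ 1`.
  · have h0 : profile q 0 = 0 := by
      simp [profile, dslope_of_ne, slope_def_field]
    rw [← continuousWithinAt_sdiff_self, ContinuousWithinAt, h0]
    have hsub : Icc (0:ℝ) 1 \ {0} ⊆ Ioi 0 := fun y hy => lt_of_le_of_ne hy.1.1 (Ne.symm hy.2)
    refine Tendsto.mono_left ?_ (nhdsWithin_mono _ hsub)
    have hlog : Tendsto (fun y : ℝ => 2 * |Real.log y|⁻¹) (𝓝[>] 0) (𝓝 0) := by
      simpa using ((tendsto_abs_atBot_atTop.comp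
        Real.tendsto_log_nhdsGT_zero).inv_tendsto_atTop).const_mul 2
    refine squeeze_zero_norm' ?_ hlog
    filter_upwards [Ioo_mem_nhdsGT (show (0:ℝ) < 1/2 by norm_num)] with y hy
    have hl : Real.log y < 0 := Real.log_neg hy.1 (by linarith [hy.2])
    have hL : 0 < |Real.log y| := abs_pos.2 hl.ne
    rw [profile, dslope_of_ne _ (by linarith [hy.2] : y ≠ 1), slope_def_field, Real.log_one,
      sub_zero, norm_div, norm_div, Real.norm_eq_abs, Real.norm_eq_abs,
      Real.norm_of_nonneg (Real.rpow_nonneg (hden _).le q)]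
    have h1 : 1/2 ≤ |y - 1| := by rw [abs_of_neg (by linarith [hy.2])]; linarith [hy.2]
    have h2 : |Real.log y| ^ 2 ≤ (Real.log y ^ 2 + 1) ^ q := by
      rw [sq_abs]
      calc Real.log y ^ 2 ≤ (Real.log y ^ 2 + 1) ^ (1:ℝ) := by rw [Real.rpow_one]; linarith
        _ ≤ _ := Real.rpow_le_rpow_of_exponent_le (by nlinarith) hq
    calc |Real.log y| / |y - 1| / (Real.log y ^ 2 + 1) ^ q
        ≤ |Real.log y| / (1/2) / |Real.log y| ^ 2 := by gcongr
      _ = 2 * |Real.log y|⁻¹ := by field_simp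
  · apply ContinuousAt.continuousWithinAt
    have hlogc : ContinuousAt Real.log x := Real.continuousAt_log hx0.ne'
    have hd : ContinuousAt (dslope Real.log 1) x := by
      by_cases h : x = 1
      · subst h
        exact continuousAt_dslope_same.2 (Real.differentiableAt_log one_ne_zero)
      · exact (continuousAt_dslope_of_ne h).2 hlogc
    exact hd.div (((hlogc.pow 2).add continuousAt_const).rpow_const (Or.inl (hden _).ne'))
      (Real.rpow_pos_of_pos (hden _) _).ne'

/-! ### The scaling limit of the stable law -/

/-- The Laplace transform identity extends to `r = 0`, since `μ` has no mass on `(-∞, 0]`. -/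
lemma laplace_nonneg {β : ℝ} (hβ0 : 0 < β)
    {μ : Measure ℝ} (hprob : IsProbabilityMeasure μ) (hsupp : μ (Set.Iic 0) = 0)
    (hlap : ∀ r : ℝ, 0 < r →
      ∫ s in Set.Ioi (0:ℝ), Real.exp (-(r * s)) ∂μ = Real.exp (-(r ^ β)))
    {r : ℝ} (hr : 0 ≤ r) :
    ∫ s in Set.Ioi (0:ℝ), Real.exp (-(r * s)) ∂μ = Real.exp (-(r ^ β)) := by
  rcases hr.eq_or_lt with rfl | hr
  · have : μ (Ioi 0) = 1 := by
      rw [← compl_Iic, prob_compl_eq_one_iff measurableSet_Iic, hsupp]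
    simp [Real.zero_rpow hβ0.ne', Measure.real, this]
  · exact hlap r hr

lemma integrableOn_exp {μ : Measure ℝ} [IsProbabilityMeasure μ] {r : ℝ} (hr : 0 ≤ r) :
    IntegrableOn (fun s => Real.exp (-(r * s))) (Ioi 0) μ := by
  refine Integrable.mono' (integrable_const (1:ℝ))
    (by fun_prop : Continuous fun s => Real.exp (-(r * s))).aestronglyMeasurable ?_
  refine (ae_restrict_iff' measurableSet_Ioi).2 (Eventually.of_forall fun s (hs : 0 < s) => ?_)
  rw [Real.norm_of_nonneg (Real.exp_pos _).le]
  exact Real.exp_le_one_iff.2 (by nlinarith [mul_nonneg hr hs.le])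

/-- With `h = l ^ (-β)`, this is the derivative of `e ^ (-a ^ β h) - e ^ (-b ^ β h)` at `h = 0`. -/
lemma tendsto_exp_diff {β : ℝ} (hβ0 : 0 < β) {a b : ℝ} (ha : 0 ≤ a) (hb : 0 ≤ b) :
    Tendsto (fun l : ℝ => l ^ β * (Real.exp (-((a / l) ^ β)) - Real.exp (-((b / l) ^ β)))) atTop
      (𝓝 (b ^ β - a ^ β)) := by
  have hd : HasDerivAt (fun h : ℝ => Real.exp (-(a ^ β * h)) - Real.exp (-(b ^ β * h)))
      (b ^ β - a ^ β) 0 := by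
    have h1 := (((hasDerivAt_id (0:ℝ)).const_mul (a ^ β)).neg.exp).sub
      (((hasDerivAt_id (0:ℝ)).const_mul (b ^ β)).neg.exp)
    convert! h1 using 1
    simp; ring
  have ht : Tendsto (fun l : ℝ => l ^ (-β)) atTop (𝓝[≠] 0) := by
    refine tendsto_nhdsWithin_iff.2 ⟨tendsto_rpow_neg_atTop hβ0, ?_⟩
    filter_upwards [eventually_gt_atTop 0] with l hl using (Real.rpow_pos_of_pos hl _).ne'
  refine ((hasDerivAt_iff_tendsto_slope.1 hd).comp ht).congr' ?_
  filter_upwards [eventually_gt_atTop 0] with l hl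
  simp only [Function.comp, slope_def_field]
  rw [Real.div_rpow ha hl.le, Real.div_rpow hb hl.le, Real.rpow_neg hl.le]
  simp [div_eq_mul_inv]
  ring

/-- The integrals of `u / (u² + 1) ^ q` against `l ^ β` times the law of `S / l`, with `S` of law
`μ`, converge to its integral against the Lévy measure `β / Γ(1 - β) u ^ (-1 - β) du`. -/
lemma tendsto_scaled {β : ℝ} (hβ0 : 0 < β) (hβ1 : β < 1)
    {μ : Measure ℝ} (hprob : IsProbabilityMeasure μ) (hsupp : μ (Set.Iic 0) = 0)
    (hlap : ∀ r : ℝ, 0 < r →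
      ∫ s in Set.Ioi (0:ℝ), Real.exp (-(r * s)) ∂μ = Real.exp (-(r ^ β)))
    {q : ℝ} (hq : 1 ≤ q) :
    Tendsto (fun l : ℝ => ∫ s in Ioi (0:ℝ), l ^ β * ((s / l) / ((s / l) ^ 2 + 1) ^ q) ∂μ) atTop
      (𝓝 (β / Real.Gamma (1 - β) * ∫ u in Ioi (0:ℝ), u ^ (-β) / (u ^ 2 + 1) ^ q)) := by
  have hΓ : 0 < Real.Gamma (1 - β) := Real.Gamma_pos_of_pos (by linarith)
  have hexpI : ∀ l : ℝ, 0 < l → ∀ s : ℝ, 0 < s → Real.exp (-(s / l)) ∈ Icc (0:ℝ) 1 :=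
    fun l hl s hs => ⟨(Real.exp_pos _).le,
      Real.exp_le_one_iff.2 (by have := div_pos hs hl; linarith)⟩
  have hmain := tendsto_integral_weight (μ := μ) (ν := volume)
    (w := fun l s => l ^ β * (1 - Real.exp (-(s / l)))) (φ := fun l s => Real.exp (-(s / l)))
    (w₀ := fun u => β / Real.Gamma (1 - β) * ((1 - Real.exp (-u)) * u ^ (-β - 1)))
    (φ₀ := fun u => Real.exp (-u)) (G := profile q) ?_ ?_ ?_ hexpI ?_ ?_ ?_ ?_ ?_
    (continuousOn_profile hq)
  · have e2 : ∫ u in Ioi (0:ℝ), β / Real.Gamma (1 - β) * ((1 - Real.exp (-u)) * u ^ (-β - 1)) *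
        profile q (Real.exp (-u)) =
        β / Real.Gamma (1 - β) * ∫ u in Ioi (0:ℝ), u ^ (-β) / (u ^ 2 + 1) ^ q := by
      rw [← integral_const_mul]
      refine setIntegral_congr_fun measurableSet_Ioi fun u (hu : 0 < u) => ?_
      have := one_sub_mul_profile (q := q) hu
      calc _ = β / Real.Gamma (1 - β) * (u ^ (-β - 1) *
            ((1 - Real.exp (-u)) * profile q (Real.exp (-u)))) := by ring
        _ = _ := by
          rw [this, Real.rpow_sub_one hu.ne']; field_simp
    rw [e2] at hmain
    refine hmain.congr' ?_
    filter_upwards [eventually_gt_atTop 0] with l hl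
    refine setIntegral_congr_fun measurableSet_Ioi fun s hs => ?_
    rw [mul_assoc, one_sub_mul_profile (div_pos hs hl)]
  · intro l hl
    have h := (((integrable_const (1:ℝ)).integrableOn (s := Ioi 0) (μ := μ)).sub
      (integrableOn_exp (μ := μ) (r := 1 / l) (by positivity))).const_mul (l ^ β)
    refine (integrableOn_congr_fun (fun s _ => ?_) measurableSet_Ioi).1 h
    simp only [Pi.sub_apply]
    rw [one_div, inv_mul_eq_div]
  · intro l hl s hs
    exact mul_nonneg (Real.rpow_nonneg hl.le _) (by linarith [(hexpI l hl s hs).2])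
  · intro l; fun_prop
  · have h := (integrableOn_levy hβ0 hβ1 zero_le_one).const_mul (β / Real.Gamma (1 - β))
    simpa [IntegrableOn] using h
  · intro s hs
    have := (hexpI 1 one_pos s hs).2
    rw [div_one] at this
    have := Real.rpow_pos_of_pos hs (-β - 1)
    exact mul_nonneg (by positivity) (mul_nonneg (by linarith) this.le)
  · fun_prop
  · intro s hs; simpa using hexpI 1 one_pos s hs
  · intro k
    have hk : (0:ℝ) ≤ k := k.cast_nonneg
    have e2 : ∫ u in Ioi (0:ℝ), β / Real.Gamma (1 - β) * ((1 - Real.exp (-u)) * u ^ (-β - 1)) *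
        Real.exp (-u) ^ k = ((k:ℝ) + 1) ^ β - (k:ℝ) ^ β := by
      have h : ∀ u : ℝ, β / Real.Gamma (1 - β) * ((1 - Real.exp (-u)) * u ^ (-β - 1)) *
          Real.exp (-u) ^ k = β / Real.Gamma (1 - β) *
          ((1 - Real.exp (-(((k:ℝ) + 1) * u))) * u ^ (-β - 1) -
            (1 - Real.exp (-((k:ℝ) * u))) * u ^ (-β - 1)) := by
        intro u
        rw [← Real.exp_nat_mul, show -(((k:ℝ) + 1) * u) = -u + k * -u by ring, Real.exp_add,
          show -((k:ℝ) * u) = k * -u by ring]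
        ring
      simp_rw [h]
      rw [integral_const_mul, integral_sub (integrableOn_levy hβ0 hβ1 (by positivity))
        (integrableOn_levy hβ0 hβ1 hk), integral_levy hβ0 hβ1 (by positivity),
        integral_levy hβ0 hβ1 hk]
      field_simp
    rw [e2]
    refine (tendsto_exp_diff hβ0 hk (by positivity : (0:ℝ) ≤ k + 1)).congr' ?_
    filter_upwards [eventually_gt_atTop 0] with l hl
    have h : ∀ s : ℝ, l ^ β * (1 - Real.exp (-(s / l))) * Real.exp (-(s / l)) ^ k =
        l ^ β * (Real.exp (-((k / l) * s)) - Real.exp (-(((k + 1) / l) * s))) := by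
      intro s
      rw [← Real.exp_nat_mul, show -(((k:ℝ) + 1) / l * s) = -(s / l) + k * -(s / l) by ring,
        Real.exp_add, show -((k:ℝ) / l * s) = k * -(s / l) by ring]
      ring
    simp_rw [h]
    rw [integral_const_mul, integral_sub (integrableOn_exp (by positivity))
      (integrableOn_exp (by positivity)),
      laplace_nonneg hβ0 hprob hsupp hlap (by positivity),
      laplace_nonneg hβ0 hprob hsupp hlap (by positivity)]

/-! ### Constants and scaling -/

lemma constant_eq {β : ℝ} (hβ0 : 0 < β) (hβ1 : β < 1) {d : ℕ} (hd : 1 ≤ d) :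
    Real.pi ^ (-(((d:ℝ) + 1)/2)) * Real.Gamma (((d:ℝ) + 1)/2) *
      (β / Real.Gamma (1 - β) *
        ∫ u in Ioi (0:ℝ), u ^ (-β) / (u ^ 2 + 1) ^ (((d:ℝ) + 1)/2)) =
    β * 2 ^ (β - 1) * Real.Gamma (((d:ℝ) + β)/2) /
      (Real.pi ^ ((d:ℝ)/2) * Real.Gamma (1 - β/2)) := by
  have hd' : (1:ℝ) ≤ d := by exact_mod_cast hd
  have hB := integral_beta hβ1 hβ0 (q := ((d:ℝ) + 1)/2) (by linarith)
  have hdup := Real.Gamma_mul_Gamma_add_half ((1 - β)/2)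
  rw [show (1 - β)/2 + 1/2 = 1 - β/2 by ring, show 2 * ((1 - β)/2) = 1 - β by ring,
    show 1 - (1 - β) = (β - 1) + 1 by ring, Real.rpow_add_one two_ne_zero] at hdup
  rw [show ((d:ℝ) + 1)/2 - (1 - β)/2 = ((d:ℝ) + β)/2 by ring] at hB
  have hπ : Real.pi ^ (-(((d:ℝ) + 1)/2)) = (Real.pi ^ ((d:ℝ)/2))⁻¹ * (√Real.pi)⁻¹ := by
    rw [Real.sqrt_eq_rpow, ← Real.rpow_neg Real.pi_pos.le, ← Real.rpow_neg Real.pi_pos.le,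
      ← Real.rpow_add Real.pi_pos]
    congr 1; ring
  have h1 : 0 < Real.Gamma (1 - β) := Real.Gamma_pos_of_pos (by linarith)
  have h2 : 0 < Real.Gamma (1 - β/2) := Real.Gamma_pos_of_pos (by linarith)
  have h3 : 0 < √Real.pi := Real.sqrt_pos.2 Real.pi_pos
  have h4 : 0 < Real.pi ^ ((d:ℝ)/2) := Real.rpow_pos_of_pos Real.pi_pos _
  have hG : Real.Gamma ((1 - β)/2) =
      Real.Gamma (1 - β) * (2 ^ (β - 1) * 2) * √Real.pi / Real.Gamma (1 - β/2) := by
    rw [eq_div_iff h2.ne', hdup]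
  calc _ = (Real.pi ^ ((d:ℝ)/2))⁻¹ * (√Real.pi)⁻¹ * (β / Real.Gamma (1 - β)) *
        (Real.Gamma (((d:ℝ) + 1)/2) *
          ∫ u in Ioi (0:ℝ), u ^ (-β) / (u ^ 2 + 1) ^ (((d:ℝ) + 1)/2)) := by rw [hπ]; ring
    _ = _ := by
      rw [hB, hG]; field_simp

/-- With `l = r t ^ (-1/β)`, the subordinated Cauchy integrand is `r ^ (-d - β) t c` times
`l ^ β h(s / l)`, where `h(u) = u / (u² + 1) ^ ((d + 1) / 2)`. -/
lemma integrand_scaling {β t r s : ℝ} (hβ0 : 0 < β) (ht : 0 < t) (hr : 0 < r) (d : ℕ) (c : ℝ) :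
    c * (t ^ (1/β) * s) / ((t ^ (1/β) * s) ^ 2 + r ^ 2) ^ (((d:ℝ) + 1)/2) =
      (r ^ (-((d:ℝ) + β)) * t * c) * ((r * t ^ (-(1/β))) ^ β *
        ((s / (r * t ^ (-(1/β)))) / ((s / (r * t ^ (-(1/β)))) ^ 2 + 1) ^ (((d:ℝ) + 1)/2))) := by
  set T := t ^ (1/β) with hT
  have hT0 : 0 < T := Real.rpow_pos_of_pos ht _
  have hTβ : T ^ β = t := by
    rw [hT, ← Real.rpow_mul ht.le, one_div_mul_cancel hβ0.ne', Real.rpow_one]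
  have h1 : s / (r * t ^ (-(1/β))) = T * s / r := by
    rw [Real.rpow_neg ht.le, ← hT]; field_simp
  have h2 : (r * t ^ (-(1/β))) ^ β = r ^ β / t := by
    rw [Real.rpow_neg ht.le, ← hT, Real.mul_rpow hr.le (by positivity), Real.inv_rpow hT0.le, hTβ]; rfl
  have h3 : ((T * s) ^ 2 + r ^ 2) ^ (((d:ℝ) + 1)/2) =
      r ^ ((d:ℝ) + 1) * ((T * s / r) ^ 2 + 1) ^ (((d:ℝ) + 1)/2) := by
    have : (T * s) ^ 2 + r ^ 2 = r ^ (2:ℝ) * ((T * s / r) ^ 2 + 1) := by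
      rw [Real.rpow_two]; field_simp
    rw [this, Real.mul_rpow (by positivity) (by positivity), ← Real.rpow_mul hr.le]
    congr 2; ring
  rw [h1, h2, h3, Real.rpow_neg hr.le, Real.rpow_add hr, Real.rpow_add hr, Real.rpow_one]
  have : 0 < ((T * s / r) ^ 2 + 1) ^ (((d:ℝ) + 1)/2) := by positivity
  have : 0 < r ^ β := by positivity
  have : 0 < r ^ (d:ℝ) := by positivity
  generalize ((T * s / r) ^ 2 + 1) ^ (((d:ℝ) + 1)/2) = D at *
  field_simp

end StableCauchy

theorem stmt_9
    (β : ℝ) (hβ0 : 0 < β) (hβ1 : β < 1)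
    (μ : Measure ℝ) (hprob : IsProbabilityMeasure μ)
    (hsupp : μ (Set.Iic 0) = 0)
    (hlap : ∀ r : ℝ, 0 < r →
      ∫ s in Set.Ioi (0:ℝ), Real.exp (-(r * s)) ∂μ = Real.exp (-(r ^ β)))
    (d : ℕ) (hd : 1 ≤ d)
    (pS : ℝ → EuclideanSpace ℝ (Fin d) → EuclideanSpace ℝ (Fin d) → ℝ)
    (hpS : ∀ t : ℝ, 0 < t → ∀ x y : EuclideanSpace ℝ (Fin d),
      pS t x y = ∫ s in Set.Ioi (0:ℝ),
        Real.pi ^ (-(((d:ℝ) + 1)/2)) * Real.Gamma (((d:ℝ) + 1)/2) *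
          (t ^ (1/β) * s) /
            ((t ^ (1/β) * s) ^ 2 + dist x y ^ 2) ^ (((d:ℝ) + 1)/2) ∂μ) :
    ∀ ε : ℝ, 0 < ε → ∃ R : ℝ, 0 < R ∧ ∀ t : ℝ, 0 < t →
      ∀ x y : EuclideanSpace ℝ (Fin d),
      R ≤ dist x y * t ^ (-(1/β)) →
      |pS t x y /
        (β * 2 ^ (β - 1) * Real.Gamma (((d:ℝ) + β)/2) /
            (Real.pi ^ ((d:ℝ)/2) * Real.Gamma (1 - β/2)) *
          (dist x y ^ (-((d:ℝ) + β)) * t)) - 1| ≤ ε := by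
  intro ε hε
  have hd' : (1:ℝ) ≤ d := by exact_mod_cast hd
  set c := Real.pi ^ (-(((d:ℝ) + 1)/2)) * Real.Gamma (((d:ℝ) + 1)/2) with hc
  set K := β * 2 ^ (β - 1) * Real.Gamma (((d:ℝ) + β)/2) /
    (Real.pi ^ ((d:ℝ)/2) * Real.Gamma (1 - β/2)) with hK
  have hK0 : 0 < K := by
    have h1 : 0 < Real.Gamma (((d:ℝ) + β)/2) := Real.Gamma_pos_of_pos (by linarith)
    have h2 : 0 < Real.Gamma (1 - β/2) := Real.Gamma_pos_of_pos (by linarith)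
    positivity
  have hlim := ((StableCauchy.tendsto_scaled hβ0 hβ1 hprob hsupp hlap (q := ((d:ℝ) + 1)/2)
    (by linarith)).const_mul c).div_const K
  rw [hc, StableCauchy.constant_eq hβ0 hβ1 hd, ← hK, ← hc, div_self hK0.ne'] at hlim
  obtain ⟨R, hR⟩ := eventually_atTop.1 (Metric.tendsto_nhds.1 hlim ε hε)
  refine ⟨max R 1, by positivity, fun t ht x y hxy => ?_⟩
  have hr : 0 < dist x y := by
    rcases (dist_nonneg (x := x) (y := y)).eq_or_lt with h | h
    · rw [← h, zero_mul] at hxy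
      linarith [le_max_right R 1]
    · exact h
  have key := hR _ ((le_max_left R 1).trans hxy)
  rw [Real.dist_eq] at key
  have hp : 0 < dist x y ^ (-((d:ℝ) + β)) := Real.rpow_pos_of_pos hr _
  rw [hpS t ht x y]
  simp_rw [StableCauchy.integrand_scaling hβ0 ht hr d]
  rw [integral_const_mul]
  refine le_of_eq_of_le ?_ key.le
  congr 2
  field_simp
end

section
/- Let p^{S^{-1}}(t,x,y) = ∫_{(0,∞)} c(d) t^β s^{-β} / ((t^β s^{-β})² + |x-y|²)^{(d+1)/2} μ_β(ds) be the Cauchy kernel on ℝ^d time-changed by an inverse β-stable subordinator, where c(d) = π^{-(d+1)/2} Γ((d+1)/2). Then, as |x-y|^{-1/β} t → ∞: if d = 1, p^{S^{-1}}(t,x,y) ∼ (β/(π Γ(1-β))) t^{-β} log(|x-y|^{-1/β} t); and if d ≥ 2, p^{S^{-1}}(t,x,y) ∼ (Γ((d-1)/2) / (2 π^{(d+1)/2} Γ(1-β))) |x-y|^{1-d} t^{-β}. Here '∼ as |x-y|^{-1/β} t → ∞' means: for every ε > 0 there exists R > 0 such that whenever t > 0, x ≠ y ∈ ℝ^d and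 |x-y|^{-1/β} t ≥ R, the ratio of the two sides lies within ε of 1. -/
open MeasureTheory Set

/-!
Let `S` have law `μ`, `X = S ^ β`, `ρ = |x - y|` and `L = t ^ β / ρ = (ρ ^ (-1/β) t) ^ β`. Scaling
out `ρ` gives `p(t, x, y) = c(d) ρ ^ (-d) E[h(X / L)]` with `h v = v ^ d (1 + v²) ^ (-(d+1)/2)`, and
by Fubini `E[h(X / L)] = ∫₀^∞ h'(v) P(X > L v) dv`. Everything thus follows from the tail asymptotics
`u P(X > u) → C := 1 / Γ(1 - β)`, which also makes `u P(X > u)` bounded.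

* For `d ≥ 2`, dominated convergence in `L E[h(X / L)] = ∫ (h'(v) / v) (L v P(X > L v)) dv` yields
  the limit `C ∫ h'(v) / v dv = C / (d - 1)`; an explicit antiderivative gives the integral.
* For `d = 1`, `h'(v) / v` is not integrable at `0`. The substitution `v = L ^ (w - 1)` turns
  `(L / log L) E[h(X / L)]` into `∫_ℝ h'(L ^ (w - 1)) (L ^ w P(X > L ^ w)) dw`. The integrand tends to
  `C` for `0 < w < 1` and to `0` outside `[0, 1]`, and a multiple of `exp (-|w|)` dominates it.

The tail asymptotics are a Karamata Tauberian theorem. The Laplace transform of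
`s ↦ l ^ β P(S > l s)` at `r > 0` is `l ^ β (1 - exp (-(r / l) ^ β)) / r → r ^ (β - 1)`, which is the
transform of `C s ^ (-β)`. By Weierstrass approximation in the variable `exp (-s)`, the integrals
against `exp (-s) φ (exp (-s))` converge for every continuous `φ`. Since the tail is monotone,
testing with bumps supported just to the right or just to the left of `s = 1` gives convergence at
`s = 1`, that is `l ^ β P(S > l) → C`.
-/

open Filter Topology

/-! ### Layer-cake formula -/

/-- `E[g(X)] = ∫₀^∞ g'(v) P(X > v) dv`. The derivative `g'` may change sign, so this is Fubini rather
than the nonnegative layer-cake formula. -/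
lemma integral_comp_eq_integral_tail {μ : Measure ℝ} [IsFiniteMeasure μ] {X g g' : ℝ → ℝ}
    (hX : Measurable X) (hpos : ∀ᵐ s ∂μ, 0 ≤ X s) (hg : ∀ x, 0 ≤ x → HasDerivAt g (g' x) x)
    (hg0 : g 0 = 0)
    (hgi : IntegrableOn g' (Ioi 0)) :
    ∫ s, g (X s) ∂μ = ∫ v in Ioi 0, g' v * μ.real {s | v < X s} := by
  have h1 : ∀ᵐ s ∂μ, g (X s) = ∫ v in Ioi (0:ℝ), {v | v < X s}.indicator g' v := by
    filter_upwards [hpos] with s hs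
    have hii : IntervalIntegrable g' volume 0 (X s) := by
      rw [intervalIntegrable_iff_integrableOn_Ioc_of_le hs]
      exact hgi.mono_set Ioc_subset_Ioi_self
    have h := intervalIntegral.integral_eq_sub_of_hasDerivAt (f := g) (f' := g') (a := 0)
      (b := X s) (fun x hx => hg x (by rw [uIcc_of_le hs] at hx; exact hx.1)) hii
    rw [hg0, sub_zero] at h
    change _ = ∫ v in Ioi 0, (Iio (X s)).indicator g' v
    rw [← h, intervalIntegral.integral_of_le hs, integral_Ioc_eq_integral_Ioo,
      setIntegral_indicator measurableSet_Iio]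
    rfl
  rw [integral_congr_ae h1, integral_integral_swap]
  · refine integral_congr_ae (ae_of_all _ fun v => ?_)
    have : ∀ s, {v | v < X s}.indicator g' v = {s | v < X s}.indicator (fun _ => g' v) s := by
      intro s; simp [indicator]
    simp only [this]
    rw [integral_indicator_const _ (measurableSet_lt measurable_const hX)]
    simp [mul_comm]
  · have h2 : Integrable (fun z : ℝ × ℝ => g' z.2) (μ.prod (volume.restrict (Ioi 0))) :=
      Integrable.comp_snd hgi μ
    exact h2.indicator (s := {z : ℝ × ℝ | z.2 < X z.1})
      (measurableSet_lt measurable_snd (hX.comp measurable_fst))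

/-! ### Tauberian theorem for the tail of the stable law -/

/-- The weights `w l` on `(0, ∞)`, carried to `[0, 1]` by `s ↦ exp (-s)`, converge weakly as soon as
their moments converge, by Weierstrass approximation. -/
lemma tendsto_integral_of_tendsto_moments {w : ℝ → ℝ → ℝ} {w₀ : ℝ → ℝ}
    (hw : ∀ᶠ l in atTop, IntegrableOn (w l) (Ioi 0))
    (hwn : ∀ᶠ l in atTop, ∀ s, 0 < s → 0 ≤ w l s)
    (hw₀ : IntegrableOn w₀ (Ioi 0)) (hw₀n : ∀ s, 0 < s → 0 ≤ w₀ s)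
    (hlim : ∀ k : ℕ, Tendsto (fun l => ∫ s in Ioi 0, Real.exp (-s) ^ k * w l s) atTop
      (𝓝 (∫ s in Ioi 0, Real.exp (-s) ^ k * w₀ s)))
    {φ : ℝ → ℝ} (hφ : Continuous φ) :
    Tendsto (fun l => ∫ s in Ioi 0, φ (Real.exp (-s)) * w l s) atTop
      (𝓝 (∫ s in Ioi 0, φ (Real.exp (-s)) * w₀ s)) := by
  have hbd : ∀ ψ : ℝ → ℝ, Continuous ψ → ∀ u : ℝ → ℝ, IntegrableOn u (Ioi 0) →
      IntegrableOn (fun s => ψ (Real.exp (-s)) * u s) (Ioi 0) := by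
    intro ψ hψ u hu
    obtain ⟨M, hM⟩ := isCompact_Icc.exists_bound_of_continuousOn (s := Icc (0:ℝ) 1) hψ.continuousOn
    refine Integrable.bdd_mul (c := M) hu
      (hψ.comp (Real.continuous_exp.comp continuous_neg)).aestronglyMeasurable ?_
    refine (ae_restrict_iff' measurableSet_Ioi).2 (ae_of_all _ fun s hs => hM _ ?_)
    exact ⟨(Real.exp_pos _).le, Real.exp_le_one_iff.2 (by simpa using (le_of_lt hs))⟩
  have hpoly : ∀ P : Polynomial ℝ, Tendsto (fun l => ∫ s in Ioi 0, P.eval (Real.exp (-s)) * w l s)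
      atTop (𝓝 (∫ s in Ioi 0, P.eval (Real.exp (-s)) * w₀ s)) := by
    intro P
    induction P using Polynomial.induction_on' with
    | add p q hp hq =>
      have e : ∀ u : ℝ → ℝ, IntegrableOn u (Ioi 0) →
          ∫ s in Ioi 0, (p + q).eval (Real.exp (-s)) * u s =
          (∫ s in Ioi 0, p.eval (Real.exp (-s)) * u s) +
            ∫ s in Ioi 0, q.eval (Real.exp (-s)) * u s := by
        intro u hu
        rw [← integral_add (hbd _ p.continuous u hu) (hbd _ q.continuous u hu)]
        simp [add_mul]
      rw [e _ hw₀]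
      refine (hp.add hq).congr' ?_
      filter_upwards [hw] with l hl using (e _ hl).symm
    | monomial n a =>
      simp only [Polynomial.eval_monomial, mul_assoc, integral_const_mul]
      exact (hlim n).const_mul a
  have hmass := hlim 0
  simp only [pow_zero, one_mul] at hmass
  set m := ∫ s in Ioi 0, w₀ s with hm
  have hm0 : 0 ≤ m := setIntegral_nonneg measurableSet_Ioi hw₀n
  rw [Metric.tendsto_atTop']
  intro ε hε
  obtain ⟨P, hP⟩ := exists_polynomial_near_of_continuousOn 0 1 φ hφ.continuousOn
    (ε / (4 * (m + 1))) (by positivity)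
  have herr : ∀ u : ℝ → ℝ, IntegrableOn u (Ioi 0) → (∀ s, 0 < s → 0 ≤ u s) →
      |(∫ s in Ioi 0, φ (Real.exp (-s)) * u s) - ∫ s in Ioi 0, P.eval (Real.exp (-s)) * u s| ≤
        ε / (4 * (m + 1)) * ∫ s in Ioi 0, u s := by
    intro u hu hun
    rw [← integral_sub (hbd _ hφ u hu) (hbd _ P.continuous u hu), ← integral_const_mul,
      ← Real.norm_eq_abs]
    refine norm_integral_le_of_norm_le (hu.const_mul _) ?_
    refine (ae_restrict_iff' measurableSet_Ioi).2 (ae_of_all _ fun s hs => ?_)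
    rw [← sub_mul, norm_mul, Real.norm_of_nonneg (hun s hs), Real.norm_eq_abs, abs_sub_comm]
    refine mul_le_mul_of_nonneg_right (hP _ ?_).le (hun s hs)
    exact ⟨(Real.exp_pos _).le, Real.exp_le_one_iff.2 (by simpa using (le_of_lt hs))⟩
  have h1 := (Metric.tendsto_nhds.1 (hpoly P)) (ε / 4) (by positivity)
  have h2 : ∀ᶠ l in atTop, (∫ s in Ioi 0, w l s) < m + 1 :=
    hmass.eventually (gt_mem_nhds (by linarith))
  have hfin : ∀ᶠ l in atTop, dist (∫ s in Ioi 0, φ (Real.exp (-s)) * w l s)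
      (∫ s in Ioi 0, φ (Real.exp (-s)) * w₀ s) < ε := by
    filter_upwards [h1, h2, hw, hwn] with l h1 h2 h3 h4
    have e1 := herr _ h3 h4
    have e2 := herr _ hw₀ hw₀n
    rw [← hm] at e2
    have b1 : ε / (4 * (m + 1)) * (∫ s in Ioi 0, w l s) ≤ ε / 4 := by
      calc _ ≤ ε / (4 * (m + 1)) * (m + 1) := by gcongr
        _ = ε / 4 := by field_simp
    have b2 : ε / (4 * (m + 1)) * m ≤ ε / 4 := by
      calc _ ≤ ε / (4 * (m + 1)) * (m + 1) := by gcongr; linarith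
        _ = ε / 4 := by field_simp
    rw [Real.dist_eq] at h1 ⊢
    rw [abs_lt] at *
    rw [abs_le] at e1 e2
    constructor <;> linarith [h1.1, h1.2, e1.1, e1.2, e2.1, e2.2]
  obtain ⟨N, hN⟩ := eventually_atTop.1 hfin
  exact ⟨N, fun n hn => hN n hn.le⟩

/-- The Laplace transform of the rescaled tail `v ↦ P(S > l v)`. -/
lemma laplace_tail {β : ℝ} {μ : Measure ℝ} [IsProbabilityMeasure μ]
    (hsupp : μ (Set.Iic 0) = 0)
    (hlap : ∀ r : ℝ, 0 < r →
      ∫ s in Set.Ioi (0:ℝ), Real.exp (-(r * s)) ∂μ = Real.exp (-(r ^ β)))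
    {r l : ℝ} (hr : 0 < r) (hl : 0 < l) :
    ∫ v in Ioi 0, Real.exp (-(r * v)) * μ.real {s | l * v < s} =
      (1 - Real.exp (-((r / l) ^ β))) / r := by
  have hae : ∀ᵐ s ∂μ, 0 < s := by
    rw [ae_iff]
    simp only [not_lt]
    exact hsupp
  have hres : μ.restrict (Ioi 0) = μ := Measure.restrict_eq_self_of_ae_mem hae
  have h := integral_comp_eq_integral_tail (μ := μ) (X := fun s => s / l)
    (g := fun x => (1 - Real.exp (-(r * x))) / r)
    (g' := fun x => Real.exp (-(r * x))) (measurable_id.div_const l)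
    (by filter_upwards [hae] with s hs using (div_pos hs hl).le)
    (fun x _ => by
      have h1 : HasDerivAt (fun x : ℝ => -(r * x)) (-(r * 1)) x :=
        ((hasDerivAt_id x).const_mul r).neg
      have := (h1.exp.const_sub 1).div_const r
      refine this.congr_deriv ?_
      field_simp)
    (by simp) (by simpa using exp_neg_integrableOn_Ioi 0 hr)
  have hset : ∀ v, {s | v < s / l} = {s | l * v < s} := by
    intro v; ext s; simp [lt_div_iff₀ hl, mul_comm]
  simp only [hset] at h
  rw [← h, integral_div]
  congr 1
  have hli : Integrable (fun s => Real.exp (-(r * (s / l)))) μ := by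
    refine Integrable.of_bound (C := 1) (by fun_prop) ?_
    filter_upwards [hae] with s hs
    rw [Real.norm_of_nonneg (Real.exp_pos _).le, Real.exp_le_one_iff]
    have := div_pos hs hl
    nlinarith [mul_pos hr this]
  rw [integral_sub (integrable_const _) hli]
  have := hlap (r / l) (div_pos hr hl)
  rw [hres] at this
  rw [← this]
  simp only [integral_const, probReal_univ, smul_eq_mul, mul_one]
  congr 2
  ext s
  congr 2
  ring

lemma laplace_lim {β r : ℝ} (hβ0 : 0 < β) (hr : 0 < r) :
    Tendsto (fun l : ℝ => l ^ β * ((1 - Real.exp (-((r / l) ^ β))) / r)) atTop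
      (𝓝 (r ^ (β - 1))) := by
  have h1 : Tendsto (fun x : ℝ => x⁻¹ * (1 - Real.exp (-x))) (𝓝[>] 0) (𝓝 1) := by
    have : HasDerivAt (fun x : ℝ => 1 - Real.exp (-x)) 1 0 := by
      have := ((hasDerivAt_id (0:ℝ)).neg.exp).const_sub 1
      simpa using this
    have := (hasDerivAt_iff_tendsto_slope.1 this).mono_left
      (nhdsWithin_mono 0 (fun x (hx : 0 < x) => hx.ne'))
    refine this.congr fun x => ?_
    simp [slope]
  have h2 : Tendsto (fun l : ℝ => (r / l) ^ β) atTop (𝓝[>] 0) := by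
    refine tendsto_nhdsWithin_iff.2 ⟨?_, ?_⟩
    · have : Tendsto (fun l : ℝ => r / l) atTop (𝓝 0) := tendsto_const_nhds.div_atTop tendsto_id
      have := this.rpow_const (p := β) (Or.inr hβ0.le)
      rwa [Real.zero_rpow hβ0.ne'] at this
    · filter_upwards [eventually_gt_atTop 0] with l hl
      exact Real.rpow_pos_of_pos (div_pos hr hl) _
  have h3 := (h1.comp h2).const_mul (r ^ (β - 1))
  rw [mul_one] at h3
  refine h3.congr' ?_
  filter_upwards [eventually_gt_atTop 0] with l hl
  have hrb := Real.rpow_pos_of_pos hr β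
  have hlb := Real.rpow_pos_of_pos hl β
  simp only [Function.comp, Real.div_rpow hr.le hl.le, Real.rpow_sub_one hr.ne']
  field_simp

/-- The rescaled tails `s ↦ l ^ β P(S > l s)` converge to `s ^ (-β) / Γ(1 - β)` when tested against
`exp (-s) φ (exp (-s))`. -/
lemma weak_tail {β : ℝ} (hβ0 : 0 < β) (hβ1 : β < 1) {μ : Measure ℝ} [IsProbabilityMeasure μ]
    (hsupp : μ (Set.Iic 0) = 0)
    (hlap : ∀ r : ℝ, 0 < r →
      ∫ s in Set.Ioi (0:ℝ), Real.exp (-(r * s)) ∂μ = Real.exp (-(r ^ β)))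
    {φ : ℝ → ℝ} (hφ : Continuous φ) :
    Tendsto (fun l : ℝ => ∫ s in Ioi 0, φ (Real.exp (-s)) *
        (Real.exp (-s) * (l ^ β * μ.real {x | l * s < x}))) atTop
      (𝓝 (∫ s in Ioi 0, φ (Real.exp (-s)) *
        (Real.exp (-s) * (1 / Real.Gamma (1 - β) * s ^ (-β))))) := by
  have hmeas : ∀ l : ℝ, 0 < l → Measurable fun s => μ.real {x | l * s < x} := by
    intro l hl
    refine Antitone.measurable fun a b hab => measureReal_mono fun x hx => ?_
    exact lt_of_le_of_lt (by gcongr) (show l * b < x from hx)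
  have hG : 0 < Real.Gamma (1 - β) := Real.Gamma_pos_of_pos (by linarith)
  refine tendsto_integral_of_tendsto_moments
    (w := fun l s => Real.exp (-s) * (l ^ β * μ.real {x | l * s < x})) ?_ ?_ ?_ ?_ ?_ hφ
  · filter_upwards [eventually_gt_atTop 0] with l hl
    have : IntegrableOn (fun s : ℝ => Real.exp (-s)) (Ioi 0) := by
      simpa using exp_neg_integrableOn_Ioi 0 one_pos
    refine this.mul_bdd (c := l ^ β) ((hmeas l hl).const_mul _).aestronglyMeasurable ?_
    refine ae_of_all _ fun s => ?_
    have := Real.rpow_nonneg hl.le β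
    rw [Real.norm_of_nonneg (by positivity)]
    exact mul_le_of_le_one_right this measureReal_le_one
  · filter_upwards [eventually_gt_atTop 0] with l hl s hs
    positivity
  · have := (Real.GammaIntegral_convergent (s := 1 - β) (by linarith)).const_mul
      (1 / Real.Gamma (1 - β))
    refine this.congr (ae_of_all _ fun s => ?_)
    have : (1 - β - 1) = -β := by ring
    simp only [this]
    ring
  · intro s hs
    positivity
  · intro k
    have hk : (0:ℝ) < k + 1 := by positivity
    have hexp : ∀ s : ℝ, Real.exp (-s) ^ k * Real.exp (-s) = Real.exp (-((k + 1) * s)) := by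
      intro s
      rw [← pow_succ, ← Real.exp_nat_mul]
      congr 1
      push_cast
      ring
    have hr : ∫ s in Ioi 0, Real.exp (-s) ^ k *
        (Real.exp (-s) * (1 / Real.Gamma (1 - β) * s ^ (-β))) = ((k:ℝ) + 1) ^ (β - 1) := by
      have h := Real.integral_rpow_mul_exp_neg_mul_Ioi (a := 1 - β) (r := k + 1) (by linarith) hk
      have e : (1 - β - 1) = -β := by ring
      rw [e] at h
      calc _ = 1 / Real.Gamma (1 - β) *
            ∫ s in Ioi 0, s ^ (-β) * Real.exp (-(((k:ℝ) + 1) * s)) := by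
              rw [← integral_const_mul]
              refine integral_congr_ae (ae_of_all _ fun s => ?_)
              simp only [← hexp]
              ring
        _ = _ := by
              rw [h, one_div ((k:ℝ) + 1), Real.inv_rpow hk.le, ← Real.rpow_neg hk.le]
              have : -(1 - β) = β - 1 := by ring
              rw [this]
              field_simp
    rw [hr]
    refine (laplace_lim hβ0 hk).congr' ?_
    filter_upwards [eventually_gt_atTop 0] with l hl
    rw [← laplace_tail hsupp hlap hk hl, ← integral_const_mul]
    refine integral_congr_ae (ae_of_all _ fun s => ?_)
    simp only [← hexp]
    ring

/-- A continuous function of `x`; as a function of `s` with `x = exp (-s)` it is positive exactly on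
the interval `(p, q)`, for `p < q`. Being continuous in `exp (-s)`, it is an admissible test function
in `weak_tail`. -/
noncomputable def bump (p q x : ℝ) : ℝ := max 0 ((x - Real.exp (-q)) * (Real.exp (-p) - x))

lemma bump_cont (p q : ℝ) : Continuous (bump p q) := by unfold bump; fun_prop

lemma bump_pos {p q s : ℝ} (h1 : p < s) (h2 : s < q) : 0 < bump p q (Real.exp (-s)) :=
  lt_max_of_lt_right (mul_pos (sub_pos.2 (Real.exp_lt_exp.2 (by linarith)))
    (sub_pos.2 (Real.exp_lt_exp.2 (by linarith))))

lemma bump_zero {p q s : ℝ} (hpq : p < q) (h : s ≤ p ∨ q ≤ s) : bump p q (Real.exp (-s)) = 0 := by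
  refine max_eq_left ?_
  rcases h with h | h
  · exact mul_nonpos_of_nonneg_of_nonpos
      (sub_nonneg.2 (Real.exp_le_exp.2 (by linarith)))
      (sub_nonpos.2 (Real.exp_le_exp.2 (by linarith)))
  · exact mul_nonpos_of_nonpos_of_nonneg
      (sub_nonpos.2 (Real.exp_le_exp.2 (by linarith)))
      (sub_nonneg.2 (Real.exp_le_exp.2 (by linarith)))

/-- Bounds `a ≤ u ≤ b` on `(p, q)` carry over to the integral of `u` against a bump supported there.
Monotonicity of `u` only serves to make the integrals finite. -/
lemma bump_compare {p q a b : ℝ} (hp : 0 < p) (hpq : p < q) {u : ℝ → ℝ}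
    (hu : AntitoneOn u (Ioi 0)) (ha : ∀ s, p < s → s < q → a ≤ u s)
    (hb : ∀ s, p < s → s < q → u s ≤ b) :
    a * (∫ s in Ioi 0, bump p q (Real.exp (-s)) * Real.exp (-s)) ≤
      ∫ s in Ioi 0, bump p q (Real.exp (-s)) * (Real.exp (-s) * u s) ∧
    ∫ s in Ioi 0, bump p q (Real.exp (-s)) * (Real.exp (-s) * u s) ≤
      b * (∫ s in Ioi 0, bump p q (Real.exp (-s)) * Real.exp (-s)) := by
  have hc : Continuous fun s => bump p q (Real.exp (-s)) * Real.exp (-s) := by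
    have := bump_cont p q
    fun_prop
  have hred : ∀ f : ℝ → ℝ, ∫ s in Ioi 0, bump p q (Real.exp (-s)) * f s =
      ∫ s in Icc p q, bump p q (Real.exp (-s)) * f s := by
    intro f
    refine (setIntegral_eq_of_subset_of_forall_sdiff_eq_zero measurableSet_Ioi
      (fun s hs => hp.trans_le hs.1) fun s hs => ?_)
    rw [bump_zero hpq, zero_mul]
    by_contra! h
    exact hs.2 ⟨h.1.le, h.2.le⟩
  rw [hred, hred]
  have i1 : IntegrableOn (fun s => bump p q (Real.exp (-s)) * Real.exp (-s)) (Icc p q) :=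
    hc.continuousOn.integrableOn_Icc
  have i2 : IntegrableOn (fun s => bump p q (Real.exp (-s)) * (Real.exp (-s) * u s)) (Icc p q) := by
    have : IntegrableOn u (Icc p q) :=
      (hu.mono fun s hs => hp.trans_le hs.1).integrableOn_isCompact isCompact_Icc
    have := this.continuousOn_mul hc.continuousOn isCompact_Icc
    simpa only [mul_assoc] using this
  have hbn : ∀ x, 0 ≤ bump p q x := fun x => le_max_left _ _
  have key : ∀ s, p < s ∧ s < q ∨ bump p q (Real.exp (-s)) = 0 := by
    intro s
    by_cases h : p < s ∧ s < q
    · exact Or.inl h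
    · right
      apply bump_zero hpq
      by_contra! h'
      exact h h'
  rw [← integral_const_mul, ← integral_const_mul]
  constructor
  · refine setIntegral_mono (i1.const_mul _) i2 fun s => ?_
    rcases key s with h | h
    · have := mul_le_mul_of_nonneg_left (ha s h.1 h.2)
        (mul_nonneg (hbn (Real.exp (-s))) (Real.exp_pos (-s)).le)
      linarith
    · simp [h]
  · refine setIntegral_mono i2 (i1.const_mul _) fun s => ?_
    rcases key s with h | h
    · have := mul_le_mul_of_nonneg_left (hb s h.1 h.2)
        (mul_nonneg (hbn (Real.exp (-s))) (Real.exp_pos (-s)).le)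
      linarith
    · simp [h]

lemma bump_int_pos {p q : ℝ} (hp : 0 < p) (hpq : p < q) :
    0 < ∫ s in Ioi 0, bump p q (Real.exp (-s)) * Real.exp (-s) := by
  have hbn : ∀ x, 0 ≤ bump p q x := fun x => le_max_left _ _
  have hc : Continuous fun s => bump p q (Real.exp (-s)) * Real.exp (-s) := by
    have := bump_cont p q
    fun_prop
  have hgi : IntegrableOn (fun s => bump p q (Real.exp (-s)) * Real.exp (-s)) (Icc p q) :=
    hc.continuousOn.integrableOn_Icc
  have : ∫ s in Ioi 0, bump p q (Real.exp (-s)) * Real.exp (-s) =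
      ∫ s in Icc p q, bump p q (Real.exp (-s)) * Real.exp (-s) := by
    refine (setIntegral_eq_of_subset_of_forall_sdiff_eq_zero measurableSet_Ioi
      (fun s hs => hp.trans_le hs.1) fun s hs => ?_)
    rw [bump_zero hpq, zero_mul]
    by_contra! h
    exact hs.2 ⟨h.1.le, h.2.le⟩
  rw [this, setIntegral_pos_iff_support_of_nonneg_ae
    (ae_of_all _ fun s => mul_nonneg (hbn _) (Real.exp_pos _).le) hgi]
  refine lt_of_lt_of_le (b := volume (Ioo p q)) (by simpa using hpq) (measure_mono fun s hs => ?_)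
  exact ⟨(mul_pos (bump_pos hs.1 hs.2) (Real.exp_pos _)).ne', hs.1.le, hs.2.le⟩

/-- `P(S > l) ∼ l ^ (-β) / Γ(1 - β)`: the monotone tail at `s = 1` is squeezed between its averages
over `(1, q)` and `(p, 1)`, where `q` and `p` are close to `1`. -/
lemma tail_asymp {β : ℝ} (hβ0 : 0 < β) (hβ1 : β < 1) {μ : Measure ℝ} [IsProbabilityMeasure μ]
    (hsupp : μ (Set.Iic 0) = 0)
    (hlap : ∀ r : ℝ, 0 < r →
      ∫ s in Set.Ioi (0:ℝ), Real.exp (-(r * s)) ∂μ = Real.exp (-(r ^ β))) :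
    Tendsto (fun l : ℝ => l ^ β * μ.real {x | l < x}) atTop (𝓝 (1 / Real.Gamma (1 - β))) := by
  have hG : 0 < Real.Gamma (1 - β) := Real.Gamma_pos_of_pos (by linarith)
  set C := 1 / Real.Gamma (1 - β) with hC
  have hC0 : 0 < C := by positivity
  have hanti : ∀ l : ℝ, 0 < l → AntitoneOn (fun s => l ^ β * μ.real {x | l * s < x}) (Ioi 0) := by
    intro l hl a _ b _ hab
    refine mul_le_mul_of_nonneg_left (measureReal_mono fun x hx => ?_) (Real.rpow_nonneg hl.le β)
    exact lt_of_le_of_lt (by gcongr) (show l * b < x from hx)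
  have hanti' : AntitoneOn (fun s : ℝ => C * s ^ (-β)) (Ioi 0) := by
    intro a ha b _ hab
    exact mul_le_mul_of_nonneg_left (Real.rpow_le_rpow_of_nonpos ha hab (by linarith)) hC0.le
  have hcont : Tendsto (fun s : ℝ => C * s ^ (-β)) (𝓝 1) (𝓝 C) := by
    have : ContinuousAt (fun s : ℝ => C * s ^ (-β)) 1 :=
      continuousAt_const.mul (Real.continuousAt_rpow_const _ _ (Or.inl one_ne_zero))
    simpa [ContinuousAt] using this
  rw [tendsto_order]
  constructor
  · intro c hc
    -- A bump on `(1, q)`, where the tail is at most its value at `1`, with `C q ^ (-β) > c`.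
    obtain ⟨q, hq, hq1⟩ := (((hcont.mono_left nhdsWithin_le_nhds).eventually
      (lt_mem_nhds hc)).and (self_mem_nhdsWithin (a := (1:ℝ)) (s := Ioi 1))).exists
    have hq1 : 1 < q := hq1
    have hI := bump_int_pos one_pos hq1
    have h1 := (bump_compare (a := C * q ^ (-β)) (b := C * 1 ^ (-β)) one_pos hq1 hanti'
      (fun s h1 h2 => hanti' (mem_Ioi.2 (by linarith)) (mem_Ioi.2 (by linarith)) h2.le)
      (fun s h1 h2 => hanti' (mem_Ioi.2 (by linarith)) (mem_Ioi.2 (by linarith)) h1.le)).1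
    have h2 := (weak_tail hβ0 hβ1 hsupp hlap (bump_cont 1 q)).eventually
      (lt_mem_nhds (lt_of_lt_of_le (mul_lt_mul_of_pos_right hq hI) h1))
    filter_upwards [h2, eventually_gt_atTop 0] with l hl hl0
    have h3 := (bump_compare (a := l ^ β * μ.real {x | l * q < x})
      (b := l ^ β * μ.real {x | l * 1 < x}) one_pos hq1 (hanti l hl0)
      (fun s h1 h2 => hanti l hl0 (mem_Ioi.2 (by linarith)) (mem_Ioi.2 (by linarith)) h2.le)
      (fun s h1 h2 => hanti l hl0 (mem_Ioi.2 (by linarith)) (mem_Ioi.2 (by linarith)) h1.le)).2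
    rw [mul_one] at h3
    exact lt_of_mul_lt_mul_right (hl.trans_le h3) hI.le
  · intro c hc
    -- A bump on `(p, 1)`, where the tail is at least its value at `1`, with `C p ^ (-β) < c`.
    obtain ⟨p, ⟨hp, hp1⟩, hp0⟩ := (((hcont.mono_left nhdsWithin_le_nhds).eventually
      (gt_mem_nhds hc)).and (self_mem_nhdsWithin (a := (1:ℝ)) (s := Iio 1)) |>.and
      (nhdsWithin_le_nhds (lt_mem_nhds (zero_lt_one (α := ℝ))))).exists
    have hp1 : p < 1 := hp1
    have hI := bump_int_pos hp0 hp1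
    have h1 := (bump_compare (a := C * 1 ^ (-β)) (b := C * p ^ (-β)) hp0 hp1 hanti'
      (fun s h1 h2 => hanti' (mem_Ioi.2 (by linarith)) (mem_Ioi.2 (by linarith)) h2.le)
      (fun s h1 h2 => hanti' (mem_Ioi.2 (by linarith)) (mem_Ioi.2 (by linarith)) h1.le)).2
    have h2 := (weak_tail hβ0 hβ1 hsupp hlap (bump_cont p 1)).eventually
      (gt_mem_nhds (lt_of_le_of_lt h1 (mul_lt_mul_of_pos_right hp hI)))
    filter_upwards [h2, eventually_gt_atTop 0] with l hl hl0
    have h3 := (bump_compare (a := l ^ β * μ.real {x | l * 1 < x})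
      (b := l ^ β * μ.real {x | l * p < x}) hp0 hp1 (hanti l hl0)
      (fun s h1 h2 => hanti l hl0 (mem_Ioi.2 (by linarith)) (mem_Ioi.2 (by linarith)) h2.le)
      (fun s h1 h2 => hanti l hl0 (mem_Ioi.2 (by linarith)) (mem_Ioi.2 (by linarith)) h1.le)).1
    rw [mul_one] at h3
    exact lt_of_mul_lt_mul_right (h3.trans_lt hl) hI.le

/-! ### The profile of the Cauchy kernel -/

/-- The profile `h v = v ^ d (1 + v²) ^ (-(d+1)/2)` of the Cauchy kernel as a function of
`v = |x - y| / τ`, where `τ` is the time. -/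
noncomputable def prof (d : ℕ) (v : ℝ) : ℝ := v ^ d * (1 + v ^ 2) ^ (-(((d:ℝ) + 1) / 2))

/-- The derivative of `prof d` for `d ≥ 1`; the exponent `d - 1` is truncated subtraction. -/
noncomputable def dprof (d : ℕ) (v : ℝ) : ℝ :=
  v ^ (d - 1) * (d - v ^ 2) * (1 + v ^ 2) ^ (-(((d:ℝ) + 3) / 2))

lemma hasDerivAt_rpow_one_add_sq (a v : ℝ) :
    HasDerivAt (fun v : ℝ => (1 + v ^ 2) ^ a) (2 * v * a * (1 + v ^ 2) ^ (a - 1)) v := by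
  have h1 : HasDerivAt (fun v : ℝ => 1 + v ^ 2) (2 * v) v := by
    simpa using ((hasDerivAt_id v).pow 2).const_add 1
  exact h1.rpow_const (Or.inl (by positivity))

lemma rpow_one_add_sq_succ (a v : ℝ) : (1 + v ^ 2) ^ (a + 1) = (1 + v ^ 2) ^ a * (1 + v ^ 2) :=
  Real.rpow_add_one (by positivity) a

lemma hasDerivAt_prof {d : ℕ} (hd : 1 ≤ d) (v : ℝ) : HasDerivAt (prof d) (dprof d v) v := by
  obtain ⟨n, rfl⟩ : ∃ n, d = n + 1 := ⟨d - 1, by omega⟩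
  have h := (hasDerivAt_pow (n + 1) v).mul
    (hasDerivAt_rpow_one_add_sq (-((((n + 1 : ℕ):ℝ) + 1) / 2)) v)
  refine h.congr_deriv ?_
  have e1 : -((((n + 1 : ℕ):ℝ) + 1) / 2) = -((((n + 1 : ℕ):ℝ) + 3) / 2) + 1 := by ring
  rw [dprof, e1, rpow_one_add_sq_succ, add_sub_cancel_right]
  push_cast
  ring

lemma pow_le_rpow_one_add_sq (m : ℕ) {v : ℝ} (hv : 0 ≤ v) :
    v ^ m ≤ (1 + v ^ 2) ^ ((m:ℝ) / 2) := by
  have h1 : v ≤ (1 + v ^ 2) ^ ((1:ℝ) / 2) := by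
    rw [← Real.sqrt_eq_rpow]
    exact Real.le_sqrt_of_sq_le (by linarith)
  calc v ^ m ≤ ((1 + v ^ 2) ^ ((1:ℝ) / 2)) ^ m := by gcongr
    _ = _ := by
      rw [← Real.rpow_mul_natCast (by positivity)]
      congr 1
      ring

/-- A common integrable bound for `h'` (take `m = d - 1`) and for `v ↦ h' v / v` (take `m = d - 2`),
where `h` is the profile `prof d`. -/
lemma pow_mul_bound {d m : ℕ} (hm : m + 1 ≤ d) {v : ℝ} (hv : 0 ≤ v) (hd : 1 ≤ d) :
    |v ^ m * (d - v ^ 2) * (1 + v ^ 2) ^ (-(((d:ℝ) + 3) / 2))| ≤ (d:ℝ) * (1 + v ^ 2)⁻¹ := by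
  have hd' : (1:ℝ) ≤ d := by exact_mod_cast hd
  have hm' : (m:ℝ) + 1 ≤ d := by exact_mod_cast hm
  have hp : (0:ℝ) < 1 + v ^ 2 := by positivity
  have h1 : |(d:ℝ) - v ^ 2| ≤ d * (1 + v ^ 2) := by
    rw [abs_le]; constructor <;> nlinarith [sq_nonneg v]
  have h2 := pow_le_rpow_one_add_sq m hv
  rw [abs_mul, abs_mul, abs_of_nonneg (pow_nonneg hv m),
    abs_of_nonneg (Real.rpow_nonneg hp.le _)]
  calc v ^ m * |(d:ℝ) - v ^ 2| * (1 + v ^ 2) ^ (-(((d:ℝ) + 3) / 2))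
      ≤ (1 + v ^ 2) ^ ((m:ℝ) / 2) * (d * (1 + v ^ 2)) * (1 + v ^ 2) ^ (-(((d:ℝ) + 3) / 2)) := by
        gcongr
    _ = d * (1 + v ^ 2) ^ ((m:ℝ) / 2 + 1 + -(((d:ℝ) + 3) / 2)) := by
        rw [Real.rpow_add hp, Real.rpow_add hp, Real.rpow_one]; ring
    _ ≤ d * (1 + v ^ 2) ^ (-1 : ℝ) := by
        gcongr
        · nlinarith [sq_nonneg v]
        · linarith
    _ = _ := by rw [Real.rpow_neg_one]

lemma dprof_bound {d : ℕ} (hd : 1 ≤ d) {v : ℝ} (hv : 0 ≤ v) :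
    |dprof d v| ≤ d * (1 + v ^ 2)⁻¹ := pow_mul_bound (by omega) hv hd

lemma dprof_cont {d : ℕ} : Continuous (dprof d) := by
  unfold dprof
  have : Continuous fun v : ℝ => (1 + v ^ 2) ^ (-(((d:ℝ) + 3) / 2)) :=
    Continuous.rpow_const (by fun_prop) fun v => Or.inl (by positivity)
  fun_prop

lemma dprof_int {d : ℕ} (hd : 1 ≤ d) : IntegrableOn (dprof d) (Ioi 0) := by
  refine Integrable.mono' (g := fun v => d * (1 + v ^ 2)⁻¹)
    (integrable_inv_one_add_sq.const_mul _).integrableOn dprof_cont.aestronglyMeasurable ?_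
  exact (ae_restrict_iff' measurableSet_Ioi).2 (ae_of_all _ fun v hv => dprof_bound hd (le_of_lt hv))

lemma dprof_div_bound {d : ℕ} (hd : 2 ≤ d) {v : ℝ} (hv : 0 < v) :
    |dprof d v / v| ≤ d * (1 + v ^ 2)⁻¹ := by
  have e : dprof d v / v = v ^ (d - 2) * (d - v ^ 2) * (1 + v ^ 2) ^ (-(((d:ℝ) + 3) / 2)) := by
    obtain ⟨n, rfl⟩ : ∃ n, d = n + 2 := ⟨d - 2, by omega⟩
    have : n + 2 - 1 = n + 1 := by omega
    rw [dprof, Nat.add_sub_cancel, this, pow_succ]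
    field_simp
  rw [e]
  exact pow_mul_bound (by omega) hv.le (by omega)

lemma tendsto_pow_rpow (m : ℕ) :
    Tendsto (fun v : ℝ => v ^ m * (1 + v ^ 2) ^ (-((m:ℝ) / 2))) atTop (𝓝 1) := by
  have h1 : Tendsto (fun v : ℝ => (1 + (v ^ 2)⁻¹) ^ (-((m:ℝ) / 2))) atTop (𝓝 1) := by
    have h2 : Tendsto (fun v : ℝ => 1 + (v ^ 2)⁻¹) atTop (𝓝 (1 + 0)) :=
      ((tendsto_inv_atTop_zero.comp (tendsto_pow_atTop two_ne_zero))).const_add 1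
    rw [add_zero] at h2
    simpa using h2.rpow_const (p := -((m:ℝ) / 2)) (Or.inl one_ne_zero)
  refine h1.congr' ?_
  filter_upwards [eventually_gt_atTop 0] with v hv
  have e : 1 + (v ^ 2)⁻¹ = (1 + v ^ 2) / v ^ 2 := by field_simp; ring
  have e2 : (v ^ 2) ^ (-((m:ℝ) / 2)) = (v ^ m)⁻¹ := by
    rw [← Real.rpow_natCast v 2, ← Real.rpow_mul hv.le, ← Real.rpow_natCast v m,
      ← Real.rpow_neg hv.le]
    congr 1
    push_cast
    ring
  rw [e, Real.div_rpow (by positivity) (by positivity), e2]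
  field_simp

/-- The antiderivative `h v / v + ∫ h v / v²` comes from integration by parts, and
`v ^ (d-1) (1 + v²) ^ (-(d-1)/2) / (d-1)` is an antiderivative of `h v / v²`. -/
lemma integral_dprof_div {d : ℕ} (hd : 2 ≤ d) :
    ∫ v in Ioi 0, dprof d v / v = 1 / ((d:ℝ) - 1) := by
  obtain ⟨n, rfl⟩ : ∃ n, d = n + 2 := ⟨d - 2, by omega⟩
  set F : ℝ → ℝ := fun v => v ^ (n + 1) * (1 + v ^ 2) ^ (-(((n:ℝ) + 3) / 2)) +
    v ^ (n + 1) * (1 + v ^ 2) ^ (-(((n:ℝ) + 1) / 2)) / (n + 1) with hF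
  have hder : ∀ v : ℝ, v ≠ 0 → HasDerivAt F (dprof (n + 2) v / v) v := by
    intro v hv
    have h := ((hasDerivAt_pow (n + 1) v).mul
      (hasDerivAt_rpow_one_add_sq (-(((n:ℝ) + 3) / 2)) v)).add
      (((hasDerivAt_pow (n + 1) v).mul
      (hasDerivAt_rpow_one_add_sq (-(((n:ℝ) + 1) / 2)) v)).div_const ((n:ℝ) + 1))
    refine h.congr_deriv ?_
    have e1 : -(((n:ℝ) + 1) / 2) = -(((n:ℝ) + 5) / 2) + 1 + 1 := by ring
    have e2 : -(((n:ℝ) + 3) / 2) = -(((n:ℝ) + 5) / 2) + 1 := by ring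
    have e3 : -((((n + 2 : ℕ):ℝ) + 3) / 2) = -(((n:ℝ) + 5) / 2) := by push_cast; ring
    have e4 : n + 2 - 1 = n + 1 := by omega
    have hn : (n:ℝ) + 1 ≠ 0 := by positivity
    rw [dprof, e3, e2, e1, e4, add_sub_cancel_right, add_sub_cancel_right, Nat.add_sub_cancel]
    simp only [rpow_one_add_sq_succ]
    push_cast
    field_simp
    ring
  have hcont : Continuous F := by
    have h : ∀ a : ℝ, Continuous fun v : ℝ => (1 + v ^ 2) ^ a := fun a =>
      Continuous.rpow_const (by fun_prop) fun v => Or.inl (by positivity)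
    have h1 := h (-(((n:ℝ) + 3) / 2))
    have h2 := h (-(((n:ℝ) + 1) / 2))
    fun_prop
  have hlim : Tendsto F atTop (𝓝 (1 * 0 + 1 / ((n:ℝ) + 1))) := by
    have h1 := tendsto_pow_rpow (n + 1)
    have h2 : Tendsto (fun v : ℝ => (1 + v ^ 2)⁻¹) atTop (𝓝 0) :=
      tendsto_inv_atTop_zero.comp
        (tendsto_atTop_add_const_left _ _ (tendsto_pow_atTop two_ne_zero))
    refine ((h1.mul h2).add (h1.div_const ((n:ℝ) + 1))).congr fun v => ?_
    have e1 : -(((n + 1 : ℕ):ℝ) / 2) = -(((n:ℝ) + 3) / 2) + 1 := by push_cast; ring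
    have e2 : -(((n:ℝ) + 1) / 2) = -(((n:ℝ) + 3) / 2) + 1 := by ring
    have : (1:ℝ) + v ^ 2 ≠ 0 := by positivity
    simp only [hF]
    rw [e1, e2, rpow_one_add_sq_succ]
    field_simp
  have hgi : IntegrableOn (fun v => dprof (n + 2) v / v) (Ioi 0) := by
    refine Integrable.mono' (g := fun v => (n + 2 : ℕ) * (1 + v ^ 2)⁻¹)
      (integrable_inv_one_add_sq.const_mul _).integrableOn
      (dprof_cont.measurable.div measurable_id).aestronglyMeasurable ?_
    exact (ae_restrict_iff' measurableSet_Ioi).2 (ae_of_all _ fun v hv => dprof_div_bound hd hv)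
  rw [integral_Ioi_of_hasDerivAt_of_tendsto hcont.continuousWithinAt
    (fun v hv => hder v (ne_of_gt hv)) hgi hlim]
  simp only [hF]
  have : ((n + 2 : ℕ):ℝ) - 1 = n + 1 := by push_cast; ring
  rw [this]
  simp

/-! ### Asymptotics of the expected profile -/

lemma tail_bound {T : ℝ → ℝ} {C : ℝ} (h1 : ∀ u, T u ≤ 1) (h0 : ∀ u, 0 ≤ T u)
    (hlim : Tendsto (fun u => u * T u) atTop (𝓝 C)) :
    ∃ K, 1 ≤ K ∧ ∀ u, 0 ≤ u → |u * T u| ≤ K := by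
  obtain ⟨N, hN⟩ := eventually_atTop.1 (hlim.eventually (gt_mem_nhds (lt_add_one C)))
  refine ⟨max 1 (max N (C + 1)), le_max_left _ _, fun u hu => ?_⟩
  rw [abs_of_nonneg (mul_nonneg hu (h0 u))]
  rcases le_total N u with h | h
  · exact (hN u h).le.trans ((le_max_right _ _).trans (le_max_right _ _))
  · exact (mul_le_of_le_one_right hu (h1 u)).trans
      (h.trans ((le_max_left _ _).trans (le_max_right _ _)))

/-- `L E[h(X / L)] → C / (d - 1)` for `d ≥ 2`, where `T` is the tail of `X` and `u T(u) → C`. -/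
lemma lim_ge_two {T : ℝ → ℝ} {C : ℝ} (hT : Antitone T) (h1 : ∀ u, T u ≤ 1) (h0 : ∀ u, 0 ≤ T u)
    (hlim : Tendsto (fun u => u * T u) atTop (𝓝 C)) {d : ℕ} (hd : 2 ≤ d) :
    Tendsto (fun L => L * ∫ v in Ioi 0, dprof d v * T (L * v)) atTop (𝓝 (C / ((d:ℝ) - 1))) := by
  obtain ⟨K, hK1, hK⟩ := tail_bound h1 h0 hlim
  have hmain : Tendsto (fun L => ∫ v in Ioi 0, dprof d v / v * ((L * v) * T (L * v))) atTop
      (𝓝 (∫ v in Ioi 0, dprof d v / v * C)) := by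
    refine tendsto_integral_filter_of_dominated_convergence
      (fun v => d * (1 + v ^ 2)⁻¹ * K) ?_ ?_ ?_ ?_
    · refine Eventually.of_forall fun L => Measurable.aestronglyMeasurable ?_
      have := hT.measurable
      have := (dprof_cont (d := d)).measurable
      fun_prop
    · filter_upwards [eventually_gt_atTop 0] with L hL
      refine (ae_restrict_iff' measurableSet_Ioi).2 (ae_of_all _ fun v hv => ?_)
      have hv : 0 < v := hv
      rw [norm_mul]
      exact mul_le_mul (dprof_div_bound hd hv) (hK _ (by positivity)) (norm_nonneg _)
        (by positivity)
    · exact ((integrable_inv_one_add_sq.const_mul _).mul_const _).integrableOn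
    · refine (ae_restrict_iff' measurableSet_Ioi).2 (ae_of_all _ fun v hv => ?_)
      exact (hlim.comp (tendsto_id.atTop_mul_const hv)).const_mul _
  rw [integral_mul_const, integral_dprof_div hd, one_div_mul_eq_div] at hmain
  refine hmain.congr fun L => ?_
  rw [← integral_const_mul]
  refine setIntegral_congr_fun measurableSet_Ioi fun v hv => ?_
  have : v ≠ 0 := ne_of_gt hv
  field_simp

lemma integrable_exp_neg_abs_real : Integrable fun w : ℝ => Real.exp (-|w|) := by
  refine Integrable.mono' (g := fun w => 2 * (1 + w ^ 2)⁻¹)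
    (integrable_inv_one_add_sq.const_mul _) (by fun_prop) (ae_of_all _ fun w => ?_)
  rw [Real.norm_of_nonneg (Real.exp_pos _).le, Real.exp_neg, ← div_eq_mul_inv,
    inv_le_comm₀ (Real.exp_pos _) (by positivity), inv_div]
  have := Real.quadratic_le_exp_of_nonneg (abs_nonneg w)
  rw [sq_abs] at this
  linarith [abs_nonneg w]

/-- `(L / log L) E[h(X / L)] → C` for `d = 1`, where `T` is the tail of `X` and `u T(u) → C`; the
proof is dominated convergence after the substitution `v = L ^ (w - 1)`. -/
lemma lim_one {T : ℝ → ℝ} {C : ℝ} (hT : Antitone T) (h1 : ∀ u, T u ≤ 1) (h0 : ∀ u, 0 ≤ T u)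
    (hlim : Tendsto (fun u => u * T u) atTop (𝓝 C)) :
    Tendsto (fun L => L / Real.log L * ∫ v in Ioi 0, dprof 1 v * T (L * v)) atTop (𝓝 C) := by
  obtain ⟨K, hK1, hK⟩ := tail_bound h1 h0 hlim
  have hcv : ∀ L : ℝ, 1 < L → L / Real.log L * ∫ v in Ioi 0, dprof 1 v * T (L * v) =
      ∫ w, dprof 1 (Real.exp ((w - 1) * Real.log L)) *
        (Real.exp (w * Real.log L) * T (Real.exp (w * Real.log L))) := by
    intro L hL
    have hlog : 0 < Real.log L := Real.log_pos hL
    have himg : (fun w : ℝ => Real.exp ((w - 1) * Real.log L)) '' univ = Ioi 0 := by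
      ext x
      simp only [image_univ, mem_range, mem_Ioi]
      constructor
      · rintro ⟨w, rfl⟩
        exact Real.exp_pos _
      · intro hx
        refine ⟨Real.log x / Real.log L + 1, ?_⟩
        rw [add_sub_cancel_right, div_mul_cancel₀ _ hlog.ne', Real.exp_log hx]
    have h := integral_image_eq_integral_abs_deriv_smul (s := univ)
      (f := fun w : ℝ => Real.exp ((w - 1) * Real.log L))
      (f' := fun w => Real.exp ((w - 1) * Real.log L) * (1 * Real.log L)) MeasurableSet.univ
      (fun w _ => ((((hasDerivAt_id w).sub_const 1).mul_const (Real.log L)).exp).hasDerivWithinAt)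
      (fun a _ b _ hab => by
        have := mul_right_cancel₀ hlog.ne' (Real.exp_injective hab)
        linarith)
      (fun v => dprof 1 v * T (L * v))
    rw [himg, setIntegral_univ] at h
    rw [h, ← integral_const_mul]
    refine integral_congr_ae (ae_of_all _ fun w => ?_)
    have e : Real.exp (w * Real.log L) = L * Real.exp ((w - 1) * Real.log L) := by
      have : w * Real.log L = Real.log L + (w - 1) * Real.log L := by ring
      rw [this, Real.exp_add, Real.exp_log (by linarith)]
    simp only [e, smul_eq_mul, one_mul]
    rw [abs_of_nonneg (by positivity)]
    field_simp
  have hlogt := Real.tendsto_log_atTop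
  have hd1 : ∀ v : ℝ, 0 ≤ v → |dprof 1 v| ≤ (1 + v ^ 2)⁻¹ := fun v hv => by
    simpa using dprof_bound le_rfl hv
  have hmain : Tendsto (fun L => ∫ w, dprof 1 (Real.exp ((w - 1) * Real.log L)) *
        (Real.exp (w * Real.log L) * T (Real.exp (w * Real.log L)))) atTop
      (𝓝 (∫ w, (Ioo (0:ℝ) 1).indicator (fun _ => C) w)) := by
    refine tendsto_integral_filter_of_dominated_convergence
      (fun w => Real.exp 1 * K * Real.exp (-|w|)) ?_ ?_ (integrable_exp_neg_abs_real.const_mul _) ?_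
    · refine Eventually.of_forall fun L => Measurable.aestronglyMeasurable ?_
      have := hT.measurable
      have := (dprof_cont (d := 1)).measurable
      fun_prop
    · filter_upwards [hlogt.eventually_ge_atTop 1] with L hL
      refine ae_of_all _ fun w => ?_
      set v := Real.exp ((w - 1) * Real.log L) with hv
      set u := Real.exp (w * Real.log L) with hu
      have hv0 : 0 < v := Real.exp_pos _
      have hu0 : 0 < u := Real.exp_pos _
      have hT' := hK u hu0.le
      have hdv := hd1 v hv0.le
      have hdv1 : |dprof 1 v| ≤ 1 :=
        hdv.trans (inv_le_one_of_one_le₀ (by nlinarith [sq_nonneg v]))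
      rw [norm_mul, Real.norm_eq_abs, Real.norm_eq_abs]
      -- For `w ≤ 0` the decay comes from `u = L ^ w ≤ exp w`, for `w ≥ 1` from `h' v = O(v⁻²)`.
      rcases le_total w 0 with hw | hw
      · have hu1 : |u * T u| ≤ Real.exp (-|w|) := by
          rw [abs_of_nonneg (mul_nonneg hu0.le (h0 u)), abs_of_nonpos hw, neg_neg]
          refine (mul_le_of_le_one_right hu0.le (h1 u)).trans (Real.exp_le_exp.2 ?_)
          nlinarith
        have he : 1 ≤ Real.exp 1 * K := by
          nlinarith [Real.add_one_le_exp (1:ℝ)]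
        calc |dprof 1 v| * |u * T u| ≤ 1 * Real.exp (-|w|) :=
              mul_le_mul hdv1 hu1 (abs_nonneg _) zero_le_one
          _ ≤ _ := by gcongr
      · rw [abs_of_nonneg hw]
        have hdw : |dprof 1 v| ≤ Real.exp 1 * Real.exp (-w) := by
          rw [← Real.exp_add]
          rcases le_total w 1 with hw1 | hw1
          · exact hdv1.trans (Real.one_le_exp (by linarith))
          · refine hdv.trans ?_
            rw [show (1:ℝ) + -w = -(w - 1) by ring, Real.exp_neg]
            refine inv_anti₀ (Real.exp_pos _) ?_
            have hwv : Real.exp (w - 1) ≤ v := Real.exp_le_exp.2 (by nlinarith)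
            nlinarith [sq_nonneg (v - 1)]
        calc |dprof 1 v| * |u * T u| ≤ (Real.exp 1 * Real.exp (-w)) * K := by gcongr
          _ = _ := by ring
    · have hne : ∀ᵐ w : ℝ, w ≠ 0 ∧ w ≠ 1 := by
        filter_upwards [compl_mem_ae_iff.2 (measure_singleton (μ := volume) (0:ℝ)),
          compl_mem_ae_iff.2 (measure_singleton (μ := volume) (1:ℝ))] with w h h' using ⟨h, h'⟩
      filter_upwards [hne] with w hw
      have hneg : ∀ a : ℝ, a < 0 → Tendsto (fun L => Real.exp (a * Real.log L)) atTop (𝓝 0) :=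
        fun a ha => Real.tendsto_exp_atBot.comp (hlogt.const_mul_atTop_of_neg ha)
      have hpos : ∀ a : ℝ, 0 < a → Tendsto (fun L => Real.exp (a * Real.log L)) atTop atTop :=
        fun a ha => Real.tendsto_exp_atTop.comp (hlogt.const_mul_atTop ha)
      have hdz : Tendsto (dprof 1) (𝓝 0) (𝓝 1) := by
        have := (dprof_cont (d := 1)).tendsto 0
        simpa [dprof] using this
      rcases lt_or_gt_of_ne hw.1 with h | h
      · rw [indicator_of_notMem (fun h' => absurd h'.1 (by linarith))]
        have h2 : Tendsto (fun L => Real.exp (w * Real.log L) * T (Real.exp (w * Real.log L)))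
            atTop (𝓝 0) :=
          squeeze_zero (fun L => mul_nonneg (Real.exp_pos _).le (h0 _))
            (fun L => mul_le_of_le_one_right (Real.exp_pos _).le (h1 _)) (hneg w h)
        simpa using (hdz.comp (hneg (w - 1) (by linarith))).mul h2
      · have h2 := hlim.comp (hpos w h)
        rcases lt_or_gt_of_ne hw.2 with h' | h'
        · rw [indicator_of_mem (show w ∈ Ioo (0:ℝ) 1 from ⟨h, h'⟩)]
          simpa using (hdz.comp (hneg (w - 1) (by linarith))).mul h2
        · rw [indicator_of_notMem (fun h'' => absurd h''.2 (by linarith))]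
          have hdi : Tendsto (dprof 1) atTop (𝓝 0) := by
            refine squeeze_zero_norm' (a := fun v : ℝ => (1 + v ^ 2)⁻¹) ?_ ?_
            · filter_upwards [eventually_ge_atTop 0] with v hv using hd1 v hv
            · exact tendsto_inv_atTop_zero.comp
                (tendsto_atTop_add_const_left _ _ (tendsto_pow_atTop two_ne_zero))
          simpa using (hdi.comp (hpos (w - 1) (by linarith))).mul h2
  have hval : ∫ w, (Ioo (0:ℝ) 1).indicator (fun _ => C) w = C := by
    rw [integral_indicator_const _ measurableSet_Ioo]
    simp
  rw [hval] at hmain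
  refine hmain.congr' ?_
  filter_upwards [eventually_gt_atTop 1] with L hL using (hcv L hL).symm

/-! ### The time-changed kernel -/

/-- The Cauchy kernel at time `a / X` and distance `ρ`, without its constant, is the profile at
`X ρ / a` divided by `ρ ^ d`. -/
lemma kernel_eq {d : ℕ} {a ρ X : ℝ} (ha : 0 < a) (hρ : 0 < ρ) (hX : 0 < X) :
    a * X⁻¹ / ((a * X⁻¹) ^ 2 + ρ ^ 2) ^ (((d:ℝ) + 1) / 2) = prof d (X / (a / ρ)) / ρ ^ d := by
  set v := X / (a / ρ) with hv
  have hv0 : 0 < v := by positivity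
  have e1 : a * X⁻¹ = ρ / v := by rw [hv]; field_simp
  have e2 : (ρ / v) ^ 2 + ρ ^ 2 = (ρ / v) ^ 2 * (1 + v ^ 2) := by field_simp
  have e3 : ((ρ / v) ^ 2) ^ (((d:ℝ) + 1) / 2) = (ρ / v) ^ (d + 1) := by
    rw [← Real.rpow_natCast (ρ / v) 2, ← Real.rpow_mul (by positivity),
      ← Real.rpow_natCast (ρ / v) (d + 1)]
    congr 1
    push_cast
    ring
  have hp : 0 < (1 + v ^ 2) ^ (((d:ℝ) + 1) / 2) := Real.rpow_pos_of_pos (by positivity) _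
  rw [e1, e2, Real.mul_rpow (by positivity) (by positivity), e3, prof,
    Real.rpow_neg (by positivity), div_pow]
  field_simp
  ring

theorem stmt_11
    (β : ℝ) (hβ0 : 0 < β) (hβ1 : β < 1)
    (μ : Measure ℝ) (hprob : IsProbabilityMeasure μ)
    (hsupp : μ (Set.Iic 0) = 0)
    (hlap : ∀ r : ℝ, 0 < r →
      ∫ s in Set.Ioi (0:ℝ), Real.exp (-(r * s)) ∂μ = Real.exp (-(r ^ β)))
    (d : ℕ) (hd : 1 ≤ d)
    (pSinv : ℝ → EuclideanSpace ℝ (Fin d) → EuclideanSpace ℝ (Fin d) → ℝ)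
    (hpSinv : ∀ t : ℝ, 0 < t → ∀ x y : EuclideanSpace ℝ (Fin d),
      pSinv t x y = ∫ s in Set.Ioi (0:ℝ),
        Real.pi ^ (-(((d:ℝ) + 1)/2)) * Real.Gamma (((d:ℝ) + 1)/2) *
          (t ^ β * s ^ (-β)) /
            ((t ^ β * s ^ (-β)) ^ 2 + dist x y ^ 2) ^ (((d:ℝ) + 1)/2) ∂μ) :
    (d = 1 →
      ∀ ε : ℝ, 0 < ε → ∃ R : ℝ, 0 < R ∧ ∀ t : ℝ, 0 < t →
        ∀ x y : EuclideanSpace ℝ (Fin d), x ≠ y →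
        R ≤ dist x y ^ (-(1/β)) * t →
        |pSinv t x y /
          (β / (Real.pi * Real.Gamma (1 - β)) * t ^ (-β) *
            Real.log (dist x y ^ (-(1/β)) * t)) - 1| ≤ ε) ∧
    (2 ≤ d →
      ∀ ε : ℝ, 0 < ε → ∃ R : ℝ, 0 < R ∧ ∀ t : ℝ, 0 < t →
        ∀ x y : EuclideanSpace ℝ (Fin d), x ≠ y →
        R ≤ dist x y ^ (-(1/β)) * t →
        |pSinv t x y /
          (Real.Gamma (((d:ℝ) - 1)/2) /
              (2 * Real.pi ^ (((d:ℝ) + 1)/2) * Real.Gamma (1 - β)) *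
            (dist x y ^ (1 - (d:ℝ)) * t ^ (-β))) - 1| ≤ ε) := by
  have hG : 0 < Real.Gamma (1 - β) := Real.Gamma_pos_of_pos (by linarith)
  have hpi := Real.pi_pos
  have hae : ∀ᵐ s ∂μ, 0 < s := by
    rw [ae_iff]
    simp only [not_lt]
    exact hsupp
  have hres : μ.restrict (Ioi 0) = μ := Measure.restrict_eq_self_of_ae_mem hae
  have hXm : Measurable fun s : ℝ => s ^ β := measurable_id.pow_const β
  set T : ℝ → ℝ := fun u => μ.real {s | u < s ^ β} with hTdef
  have hT : Antitone T := fun a b hab => measureReal_mono fun s hs => lt_of_le_of_lt hab hs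
  have h1 : ∀ u, T u ≤ 1 := fun u => measureReal_le_one
  have h0 : ∀ u, 0 ≤ T u := fun u => measureReal_nonneg
  have hlim : Tendsto (fun u => u * T u) atTop (𝓝 (1 / Real.Gamma (1 - β))) := by
    have h := (tail_asymp hβ0 hβ1 hsupp hlap).comp
      (tendsto_rpow_atTop (y := 1 / β) (by positivity))
    refine h.congr' ?_
    filter_upwards [eventually_gt_atTop 0] with u hu
    have e : (u ^ (1 / β)) ^ β = u := by
      rw [← Real.rpow_mul hu.le, one_div_mul_cancel hβ0.ne', Real.rpow_one]
    simp only [Function.comp, e, hTdef]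
    congr 1
    refine measureReal_congr ?_
    filter_upwards [hae] with s hs
    refine propext ?_
    change u ^ (1 / β) < s ↔ u < s ^ β
    rw [← Real.rpow_lt_rpow_iff (Real.rpow_nonneg hu.le _) hs.le hβ0, e]
  set c := Real.pi ^ (-(((d:ℝ) + 1)/2)) * Real.Gamma (((d:ℝ) + 1)/2) with hc
  have hp : ∀ t : ℝ, 0 < t → ∀ x y : EuclideanSpace ℝ (Fin d), x ≠ y →
      pSinv t x y = c * (∫ v in Ioi 0, dprof d v * T ((t ^ β / dist x y) * v)) /
        dist x y ^ d := by
    intro t ht x y hxy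
    have hρ : 0 < dist x y := dist_pos.2 hxy
    have htb : 0 < t ^ β := Real.rpow_pos_of_pos ht β
    have hL : 0 < t ^ β / dist x y := by positivity
    have h := integral_comp_eq_integral_tail (μ := μ) (X := fun s => s ^ β / (t ^ β / dist x y))
      (hXm.div_const _)
      (by filter_upwards [hae] with s hs
          exact (div_pos (Real.rpow_pos_of_pos hs β) hL).le)
      (fun v _ => hasDerivAt_prof hd v) (by simp [prof, show d ≠ 0 by omega]) (dprof_int hd)
    have hset : ∀ v, {s : ℝ | v < s ^ β / (t ^ β / dist x y)} =
        {s | (t ^ β / dist x y) * v < s ^ β} := by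
      intro v
      ext s
      change v < s ^ β / (t ^ β / dist x y) ↔ t ^ β / dist x y * v < s ^ β
      rw [lt_div_iff₀ hL, mul_comm]
    simp only [hset] at h
    rw [hpSinv t ht x y, hres, ← h, mul_div_assoc, ← integral_div, ← integral_const_mul]
    refine integral_congr_ae ?_
    filter_upwards [hae] with s hs
    rw [← kernel_eq htb hρ (Real.rpow_pos_of_pos hs β), Real.rpow_neg hs.le, mul_div_assoc]
  have hlam : ∀ t : ℝ, 0 < t → ∀ x y : EuclideanSpace ℝ (Fin d), x ≠ y →
      t ^ β / dist x y = (dist x y ^ (-(1/β)) * t) ^ β := by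
    intro t ht x y hxy
    have hρ : 0 < dist x y := dist_pos.2 hxy
    rw [Real.mul_rpow (by positivity) ht.le, ← Real.rpow_mul hρ.le]
    have : -(1 / β) * β = -1 := by field_simp
    rw [this, Real.rpow_neg_one]
    ring
  have hR : ∀ Q : ℝ → ℝ, Tendsto Q atTop (𝓝 1) → ∀ ε : ℝ, 0 < ε →
      ∃ R : ℝ, 0 < R ∧ ∀ l, R ≤ l → |Q (l ^ β) - 1| ≤ ε := by
    intro Q hQ ε hε
    have := (Metric.tendsto_nhds.1 (hQ.comp (tendsto_rpow_atTop hβ0)) ε hε)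
    obtain ⟨N, hN⟩ := eventually_atTop.1 this
    refine ⟨max N 1, by positivity, fun l hl => ?_⟩
    have := hN l ((le_max_left _ _).trans hl)
    rw [Real.dist_eq] at this
    exact this.le
  constructor
  · intro hd1 ε hε
    subst hd1
    have hc1 : c = 1 / Real.pi := by
      rw [hc]
      norm_num [Real.rpow_neg_one]
    obtain ⟨R, hR0, hR⟩ := hR (fun L => Real.Gamma (1 - β) *
      (L / Real.log L * ∫ v in Ioi 0, dprof 1 v * T (L * v))) (by
        have := (lim_one hT h1 h0 hlim).const_mul (Real.Gamma (1 - β))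
        rwa [mul_one_div_cancel hG.ne'] at this) ε hε
    refine ⟨R, hR0, fun t ht x y hxy hle => ?_⟩
    have hρ : 0 < dist x y := dist_pos.2 hxy
    have hl := hlam t ht x y hxy
    have hpos : 0 < dist x y ^ (-(1/β)) * t := hR0.trans_le hle
    have htb : 0 < t ^ β := Real.rpow_pos_of_pos ht β
    convert hR _ hle using 3
    rw [hp t ht x y hxy, hc1, Real.log_rpow hpos, ← hl, Real.rpow_neg ht.le]
    field_simp
  · intro hd2 ε hε
    have hd2' : (2:ℝ) ≤ d := by exact_mod_cast hd2
    have hd1 : 0 < (d:ℝ) - 1 := by linarith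
    have hg : 0 < Real.Gamma (((d:ℝ) - 1)/2) := Real.Gamma_pos_of_pos (by linarith)
    have hP : 0 < Real.pi ^ (((d:ℝ) + 1)/2) := Real.rpow_pos_of_pos hpi _
    have hc2 : c = ((d:ℝ) - 1) / 2 * Real.Gamma (((d:ℝ) - 1)/2) / Real.pi ^ (((d:ℝ) + 1)/2) := by
      rw [hc, ← Real.Gamma_add_one (by positivity), Real.rpow_neg hpi.le,
        show ((d:ℝ) - 1) / 2 + 1 = ((d:ℝ) + 1) / 2 by ring]
      ring
    obtain ⟨R, hR0, hR⟩ := hR (fun L => Real.Gamma (1 - β) * ((d:ℝ) - 1) *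
      (L * ∫ v in Ioi 0, dprof d v * T (L * v))) (by
        have := (lim_ge_two hT h1 h0 hlim hd2).const_mul (Real.Gamma (1 - β) * ((d:ℝ) - 1))
        convert this using 2
        field_simp) ε hε
    refine ⟨R, hR0, fun t ht x y hxy hle => ?_⟩
    have hρ : 0 < dist x y := dist_pos.2 hxy
    have hl := hlam t ht x y hxy
    have htb : 0 < t ^ β := Real.rpow_pos_of_pos ht β
    convert hR _ hle using 3
    rw [hp t ht x y hxy, hc2, ← hl, Real.rpow_neg ht.le, Real.rpow_sub hρ, Real.rpow_one,
      Real.rpow_natCast]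
    field_simp
end
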